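/- arXiv:2109.00905 — 2 statements merged into one kernel-verified Lean document; each statement's English description precedes it below -/
import Mathlib

section
/- For every v ∈ [17/1000, 1], the value of the marker game in which the slow player (speed bound v) holds the marker equals Vm(v) = (24v³+68v²+76v+24)/((v+1)³(v+3)). -/
/-! The value is computed by a matching lower and upper bound.

Lower bound. Write `A, B, C, D` for the agents `(-1, 1)`, `(1, -1)`, `(1, 1)`, `(-1, -1)`. Before
player I meets the agent `(o, b)`, the agent is always on the side `o` of player I, since both move
continuously. An agent that finds the marker moves at unit speed ever after, at least as fast as
player I, so it can be met later only if it moves towards player I, that is, with velocity `-o`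
(`exists_meet`). Hence a profile is described, as far as the rendezvous times are concerned, by the
four meeting times and the four times at which the agents stop following `g`, together with the
values of `f` and `g` at these times and of `f` at the drop time (`Config`). The constraints are
that `f` is `v`-Lipschitz, that `g` is `1`-Lipschitz, and the meeting equations. By the symmetries of the
line and of `g` the agent `A` may be assumed to be met first (`bound_of_meets`). Once the order of
all times and the set of agents that find the marker are fixed, minimising the sum of the meeting
times is a linear programme with parameter `v`, and the bound follows from a nonnegative combination
of its constraints (`Config.bound`).

Upper bound. In the optimal profile player I moves right until time `1 / (3 + v)`, drops the marker
there and turns back; player II moves forward until time `3 / (3 + v)` and then backward. At that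
time player I meets `A`, while `B` finds the marker and therefore keeps moving left instead of
turning. Player I then meets `B`, `D`, `C` in this order, always moving towards the next one
(`exists_profile`). -/

open Set

/-- `PiecewiseLin S g` : `g` starts at `0` and is piecewise linear with finitely many
pieces, each slope belonging to `S` (the last piece extending to `+∞`). -/
def PiecewiseLin (S : Set ℝ) (g : ℝ → ℝ) : Prop :=
  g 0 = 0 ∧ ∃ (n : ℕ) (τ : ℕ → ℝ) (c : ℕ → ℝ),
    τ 0 = 0 ∧ (∀ i, i < n → τ i ≤ τ (i + 1)) ∧ (∀ i, i ≤ n → c i ∈ S) ∧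
    (∀ i, i < n → ∀ t, τ i ≤ t → t ≤ τ (i + 1) → g t = g (τ i) + c i * (t - τ i)) ∧
    (∀ t, τ n ≤ t → g t = g (τ n) + c n * (t - τ n))

/-- `AgentTraj f g z sAfter o b p` : `p` is the trajectory of the agent of player II
with starting point `o` and forward direction `b`, when player I moves along `f` and
drops a marker at position `f z` at time `z`, and player II's strategy is `g`. The agent
follows `o + b • g` until the first time `τ ≥ z` (if any, occurring before its rendezvous
with player I) at which it stands on the marker; from then on it moves at speed `sAfter`
in its direction of motion at time `τ⁻`. -/
def AgentTraj (f g : ℝ → ℝ) (z sAfter o b : ℝ) (p : ℝ → ℝ) : Prop :=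
  -- either the agent never finds the marker before its rendezvous and `p = o + b • g` …
  ((∀ t, p t = o + b * g t) ∧
    ¬∃ τ, z ≤ τ ∧ o + b * g τ = f z ∧ ∀ t, 0 ≤ t → t < τ → f t ≠ o + b * g t) ∨
  -- … or it finds the marker at time `τ`, before its rendezvous, and continues at
  -- speed `sAfter` in its direction `d` of motion at time `τ⁻` (of left slope `c`).
  ∃ τ c d, z ≤ τ ∧ o + b * g τ = f z ∧
    (∀ t, 0 ≤ t → t < τ → f t ≠ o + b * g t) ∧
    (∀ t, z ≤ t → t < τ → o + b * g t ≠ f z) ∧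
    (0 < τ → ∃ ε > 0, ∀ s, τ - ε ≤ s → s ≤ τ → o + b * g s = o + b * g τ + c * (s - τ)) ∧
    (d = sAfter ∨ d = -sAfter) ∧ (0 < c → d = sAfter) ∧ (c < 0 → d = -sAfter) ∧
    (∀ t, 0 ≤ t → t ≤ τ → p t = o + b * g t) ∧
    (∀ t, τ ≤ t → p t = o + b * g τ + d * (t - τ))

/-- The rendezvous time of player I (at `f`) with an agent moving along `p`. -/
noncomputable def rdvTime (f p : ℝ → ℝ) : ℝ := sInf {t | 0 ≤ t ∧ f t = p t}

/-- A full strategy profile for the marker game: player I plays a piecewise linear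
trajectory `f` with slopes in `Sf` and drops the marker at time `z ≥ 0`; player II plays
a piecewise linear `g` with slopes in `Sg`; `p o b` is the resulting trajectory of the
agent `(o, b)`, which moves at speed `sAfter` after finding the marker, and each of the
four rendezvous times is finite. -/
def MarkerProfile (Sf Sg : Set ℝ) (sAfter : ℝ) (f g : ℝ → ℝ) (z : ℝ)
    (p : ℝ → ℝ → ℝ → ℝ) : Prop :=
  PiecewiseLin Sf f ∧ PiecewiseLin Sg g ∧ 0 ≤ z ∧
    ∀ o b : ℝ, (o = 1 ∨ o = -1) → (b = 1 ∨ b = -1) →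
      AgentTraj f g z sAfter o b (p o b) ∧ {t | 0 ≤ t ∧ f t = p o b t}.Nonempty

/-- The sum of the four rendezvous times in the marker game. -/
noncomputable def markerSum (f : ℝ → ℝ) (p : ℝ → ℝ → ℝ → ℝ) : ℝ :=
  rdvTime f (p 1 1) + rdvTime f (p 1 (-1)) + rdvTime f (p (-1) 1) + rdvTime f (p (-1) (-1))

/-- The value of the marker game: infimum of the sum of the four rendezvous times. -/
noncomputable def markerValue (Sf Sg : Set ℝ) (sAfter : ℝ) : ℝ :=
  sInf {S | ∃ f g z p, MarkerProfile Sf Sg sAfter f g z p ∧ S = markerSum f p}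

/-- `Vm v` : value of the marker game where the slow player (speed bound `v`) holds the
marker and the fast player (speed bound `1`, always moving at full speed) searches. -/
noncomputable def Vm (v : ℝ) : ℝ := markerValue (Icc (-v) v) {-1, 1} 1

/-- `W v` : value of the marker game where the fast player (speed bound `1`) holds the
marker and the slow player (speed bound `v`) searches, moving at maximal speed `v` after
finding the marker. -/
noncomputable def W (v : ℝ) : ℝ := markerValue (Icc (-1) 1) (Icc (-v) v) v

/-! ### Finite data extracted from a strategy profile -/

/-- One rendezvous of player I with the agent `(o, b)`, seen only through finitely many
numbers: `T` is the rendezvous time and `σ ≤ T` is the time until which the agent follows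
player II's strategy. Either the marker has not been found before the rendezvous (`T = σ`), or
it is found at time `σ ≥ z`; from then on the agent moves with velocity `-o`, towards player I. -/
structure Meet (f g : ℝ → ℝ) (z o b T σ : ℝ) : Prop where
  nonneg : 0 ≤ σ
  le : σ ≤ T
  eq : f T = o + b * g σ - o * (T - σ)
  status : T = σ ∨ z ≤ σ ∧ o + b * g σ = f z

/-- `LipFrom K f` : `f` is `K`-Lipschitz on `[0, ∞)`. -/
def LipFrom (K : ℝ) (f : ℝ → ℝ) : Prop := ∀ x y, 0 ≤ x → x ≤ y → |f y - f x| ≤ K * (y - x)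

theorem LipFrom.neg {K : ℝ} {f : ℝ → ℝ} (h : LipFrom K f) : LipFrom K (fun t => -f t) := by
  intro x y hx hxy
  have := h x y hx hxy
  rwa [← abs_neg, show -(-f y - -f x) = f y - f x by ring]

/-- The finite optimisation problem to which the lower bound reduces. The times `a, b, c, d` are
the rendezvous times with the agents `A = (-1, 1)`, `B = (1, -1)`, `C = (1, 1)`, `D = (-1, -1)`,
and `p, q, r, s` are the respective times until which these agents follow `g`, as in `Meet`
(the equations for `f a, …, f d` being solved for `g p, …, g s`). Agent `A` is met first. -/
structure Config (v : ℝ) (f g : ℝ → ℝ) (z a b c d p q r s : ℝ) : Prop where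
  v0 : 0 ≤ v
  v1 : v ≤ 1
  z0 : 0 ≤ z
  lf : LipFrom v f
  lg : LipFrom 1 g
  f0 : f 0 = 0
  g0 : g 0 = 0
  p0 : 0 ≤ p
  q0 : 0 ≤ q
  r0 : 0 ≤ r
  s0 : 0 ≤ s
  pa : p ≤ a
  qb : q ≤ b
  rc : r ≤ c
  sd : s ≤ d
  gA : g p = f a + 1 - (a - p)
  gB : g q = 1 - f b - (b - q)
  gC : g r = f c - 1 + (c - r)
  gD : g s = -1 - f d + (d - s)
  stA : a = p ∨ z ≤ p ∧ f a - (a - p) = f z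
  stB : b = q ∨ z ≤ q ∧ f b + (b - q) = f z
  stC : c = r ∨ z ≤ r ∧ f c + (c - r) = f z
  stD : d = s ∨ z ≤ s ∧ f d - (d - s) = f z
  hab : a ≤ b
  hac : a ≤ c
  had : a ≤ d

section Config

variable {v : ℝ} {f g : ℝ → ℝ} {z a b c d p q r s : ℝ}

theorem Config.a0 (h : Config v f g z a b c d p q r s) : 0 ≤ a := h.p0.trans h.pa
theorem Config.b0 (h : Config v f g z a b c d p q r s) : 0 ≤ b := h.q0.trans h.qb
theorem Config.c0 (h : Config v f g z a b c d p q r s) : 0 ≤ c := h.r0.trans h.rc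
theorem Config.d0 (h : Config v f g z a b c d p q r s) : 0 ≤ d := h.s0.trans h.sd

theorem Config.lipf (h : Config v f g z a b c d p q r s) {x y : ℝ} (hx : 0 ≤ x) (hxy : x ≤ y) :
    f y - f x ≤ v * (y - x) ∧ f x - f y ≤ v * (y - x) := by
  have := abs_le.1 (h.lf x y hx hxy)
  constructor <;> linarith [this.1, this.2]

/-- The Lipschitz bound for `g`, with the values of `g` replaced by given expressions. -/
theorem Config.lipg (h : Config v f g z a b c d p q r s) {x y X Y : ℝ} (hx : 0 ≤ x)
    (hxy : x ≤ y) (hX : g x = X) (hY : g y = Y) : Y - X ≤ y - x ∧ X - Y ≤ y - x := by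
  have := abs_le.1 (h.lg x y hx hxy)
  rw [hX, hY] at this
  constructor <;> linarith [this.1, this.2]

theorem Config.boundf (h : Config v f g z a b c d p q r s) {x : ℝ} (hx : 0 ≤ x) :
    f x ≤ v * x ∧ -f x ≤ v * x := by
  simpa [h.f0] using h.lipf le_rfl hx

theorem Config.boundg (h : Config v f g z a b c d p q r s) {x X : ℝ} (hx : 0 ≤ x) (hX : g x = X) :
    X ≤ x ∧ -X ≤ x := by
  simpa using h.lipg le_rfl hx h.g0 hX

theorem Config.fa (h : Config v f g z a b c d p q r s) : f a ≤ v * a ∧ -f a ≤ v * a :=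
  h.boundf h.a0
theorem Config.fb (h : Config v f g z a b c d p q r s) : f b ≤ v * b ∧ -f b ≤ v * b :=
  h.boundf h.b0
theorem Config.fd (h : Config v f g z a b c d p q r s) : f d ≤ v * d ∧ -f d ≤ v * d :=
  h.boundf h.d0
theorem Config.fz (h : Config v f g z a b c d p q r s) : f z ≤ v * z ∧ -f z ≤ v * z :=
  h.boundf h.z0

theorem Config.fab (h : Config v f g z a b c d p q r s) :
    f b - f a ≤ v * (b - a) ∧ f a - f b ≤ v * (b - a) := h.lipf h.a0 h.hab
theorem Config.fac (h : Config v f g z a b c d p q r s) :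
    f c - f a ≤ v * (c - a) ∧ f a - f c ≤ v * (c - a) := h.lipf h.a0 h.hac
theorem Config.fad (h : Config v f g z a b c d p q r s) :
    f d - f a ≤ v * (d - a) ∧ f a - f d ≤ v * (d - a) := h.lipf h.a0 h.had

theorem Config.ga (h : Config v f g z a b c d p q r s) :
    f a + 1 - (a - p) ≤ p ∧ -(f a + 1 - (a - p)) ≤ p := h.boundg h.p0 h.gA
theorem Config.gb (h : Config v f g z a b c d p q r s) :
    1 - f b - (b - q) ≤ q ∧ -(1 - f b - (b - q)) ≤ q := h.boundg h.q0 h.gB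
theorem Config.gc (h : Config v f g z a b c d p q r s) :
    f c - 1 + (c - r) ≤ r ∧ -(f c - 1 + (c - r)) ≤ r := h.boundg h.r0 h.gC

theorem Config.gd (h : Config v f g z a b c d p q r s) :
    -1 - f d + (d - s) ≤ s ∧ -(-1 - f d + (d - s)) ≤ s := h.boundg h.s0 h.gD

/-! ### The finite optimisation problem

Each lemma splits on the order of the times involved and on which agents have found the marker.
In every branch the bound is a combination of the available linear constraints whose coefficients
are polynomials in `v`, those of the inequalities being nonnegative on `[0, 1]`; the terms in `v0`
and `v1` absorb the remaining slack, which depends on `v` only. Branches that cannot occur are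
closed by a combination proving `1 ≤ 0`. -/

/-- `A` is met before it finds the marker, and `C` is met before `D`. -/
theorem Config.bound_unfound_cd (h : Config v f g z a b c d a q r s)
    (hpr : a ≤ r) (hps : a ≤ s) (hcd : c ≤ d) :
    24 * v ^ 3 + 68 * v ^ 2 + 76 * v + 24 ≤ (v + 1) ^ 3 * (v + 3) * (a + b + c + d) := by
  have v0 := h.v0
  have v1 := h.v1
  have := sub_nonneg.2 v1
  have gac := h.lipg h.p0 hpr h.gA h.gC
  have gad := h.lipg h.p0 hps h.gA h.gD
  have fcd := h.lipf h.c0 hcd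
  rcases le_total b d with hbd | hdb
  · have fbd := h.lipf h.b0 hbd
    rcases le_total q r with hqr | hrq
    · have gbc := h.lipg h.q0 hqr h.gB h.gC
      rcases h.stB with hq | ⟨zq, eb⟩
      · subst hq
        linear_combination
          2 * (3 + 15 * v + 19 * v ^ 2 + 3 * v ^ 3) * h.ga.1
          + (1 + v) * (9 + 14 * v + v ^ 2) * h.fab.1
          + (4 * v * (1 - v) + 4 * v ^ 2 * (1 - v)) * h.hab
          + (6 + 10 * v + 2 * v ^ 2 * (1 - v)) * h.gb.1 + (1 + v) ^ 2 * (3 + v) * gad.2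
          + 2 * v * (1 + v) * (3 + v) * h.fac.1 + (1 + v) * (3 + 10 * v + 3 * v ^ 2) * gbc.2
          + (1 + v) ^ 2 * (3 + v) * fcd.2 + 4 * v * (2 + 5 * v + v ^ 2) * h.fa.2
          + 4 * v * (1 + 3 * v) * v1
      · rcases le_total z a with hza | haz
        · have fza := h.lipf h.z0 hza
          rcases le_total q s with hqs | hsq
          · have gbd := h.lipg h.q0 hqs h.gB h.gD
            linear_combination
              2 * v * (1 + v) * (3 + v) * h.fac.1 + 4 * (1 + v) ^ 3 * fza.2
              + (1 + v) ^ 2 * (3 + v) * gbd.2 + (1 + v) ^ 2 * (5 + 7 * v) * h.ga.1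
              + 8 * (1 + v) ^ 3 * eb + (1 + v) ^ 2 * (1 + 3 * v) * gbc.2
              + 2 * (1 + v) * (1 + 3 * v) * gac.2 + (1 + v) ^ 2 * (3 + v) * fcd.2
              + 4 * (1 + v) ^ 3 * h.fz.1 + (1 + v) ^ 2 * (3 + v) * h.fab.1
              + (1 + v) ^ 2 * (7 + 5 * v) * h.gb.1 + 4 * v ^ 2 * v1
          · have gdb := h.lipg h.s0 hsq h.gD h.gB
            rcases h.stD with hs | ⟨zs, ed⟩
            · subst hs
              have : (1 : ℝ) ≤ 0 := by
                linear_combination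
                  1/2 * v * hsq + 1/2 * fbd.2 + 1/2 * gdb.1 + 1/2 * hbd + 1/2 * v * h.qb
              norm_num at this
            · have : (1 : ℝ) ≤ 0 := by
                linear_combination
                  -ed + 1/2 * gdb.1 + eb + 1/2 * (1 - v) * hbd + 1/2 * fbd.1 + h.qb
              norm_num at this
        · have faz := h.lipf h.a0 haz
          linear_combination
            4 * v * (2 + 5 * v + v ^ 2) * h.fa.2 + (1 + v) ^ 2 * (3 + v) * gad.2
            + (5 + 3 * v + 7 * v ^ 2 + v ^ 3) * h.fab.1 + 2 * v * (3 + 10 * v + 3 * v ^ 2) * zq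
            + (1 + v) ^ 2 * (3 + v) * fcd.2 + 2 * v * (1 + v) * (3 + v) * h.fac.1
            + 2 * (3 + 10 * v + 3 * v ^ 2) * faz.1 + 2 * (3 + 10 * v + 3 * v ^ 2) * eb
            + (1 + v) * (3 + 10 * v + 3 * v ^ 2) * gbc.2
            + 2 * (3 + 15 * v + 19 * v ^ 2 + 3 * v ^ 3) * h.ga.1
            + (2 * (1 - v) + 2 * v * (1 - v)) * h.fab.2
            + (6 + 10 * v + 2 * v ^ 2 * (1 - v)) * h.gb.1 + 4 * v * (1 + 3 * v) * v1
    · have gcb := h.lipg h.r0 hrq h.gC h.gB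
      rcases h.stC with hr | ⟨zr, ec⟩
      · subst hr
        linear_combination
          2 * (1 + v) ^ 2 * (3 + v) * h.fac.1 + 4 * (1 + v) ^ 2 * (3 + v) * h.fa.2
          + (1 + v) ^ 2 * (3 + v) * gcb.1 + (1 + v) ^ 2 * (3 + v) * h.fab.1
          + (1 + v) ^ 2 * (3 + v) * gad.2 + 4 * (1 + v) ^ 2 * (3 + v) * h.ga.1
          + 2 * (1 + v) ^ 2 * (3 + v) * gac.2 + (1 + v) ^ 2 * (3 + v) * fcd.2
          + 4 * (3 + 5 * v + 3 * v ^ 2) * v1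
      · rcases le_total z a with hza | haz
        · have fza := h.lipf h.z0 hza
          linear_combination
            2 * (1 + v) * (6 + 5 * v + v ^ 2) * h.ga.1 + (1 + v) ^ 2 * (3 + v) * fza.2
            + (1 + v) ^ 2 * (3 + v) * fcd.2 + (1 + v) * (15 + 14 * v + 3 * v ^ 2) * h.fa.2
            + (1 + v) ^ 2 * (3 + v) * gad.2 + (1 + v) ^ 2 * (3 + v) * h.fz.1
            + 2 * (1 + v) ^ 2 * (3 + v) * ec + (1 + v) ^ 2 * (3 + v) * h.fab.1
            + 2 * v * (1 + v) * (3 + v) * h.fac.1 + 2 * (1 + v) * (3 + 7 * v + 2 * v ^ 2) * gac.2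
            + (1 + v) ^ 2 * (3 + v) * gcb.1 + 4 * v0 + 10 * v * (1 + v) * v1
        · have faz := h.lipf h.a0 haz
          linear_combination
            4 * (1 + v) ^ 2 * (3 + v) * h.ga.1 + (1 + v) ^ 2 * (3 + v) * gad.2
            + 2 * (1 + v) * (3 + v) * faz.1 + (1 + v) ^ 2 * (3 + v) * gcb.1
            + 2 * v * (1 + v) * (3 + v) * h.fac.1 + 2 * (1 + v) ^ 2 * (3 + v) * gac.2
            + (1 + v) ^ 2 * (3 + v) * fcd.2 + 4 * (1 + v) ^ 2 * (3 + v) * h.fa.2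
            + (1 + v) ^ 2 * (3 + v) * h.fab.1 + 2 * v * (1 + v) * (3 + v) * zr
            + 2 * (1 + v) * (3 + v) * ec + 4 * (3 + 5 * v + 3 * v ^ 2) * v1
  · have fdb := h.lipf h.d0 hdb
    linear_combination
      4 * (1 + v) * (3 + v) * h.ga.1 + 4 * (1 + v) * (6 + 5 * v + v ^ 2) * h.fa.2
      + 2 * (1 + v) ^ 2 * (3 + v) * gad.2 + (3 + 13 * v + 25 * v ^ 2 + 7 * v ^ 3) * gac.2
      + 1/2 * (10 + 12 * v + 6 * v ^ 2 + v ^ 3) * fdb.1 + 3 * hdb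
      + 2 * (1 + v) ^ 2 * (3 + v) * fcd.2 + 4 * v ^ 2 * (3 + v) * h.fac.1
      + 1/2 * (10 + 12 * v + 6 * v ^ 2 + v ^ 3) * fdb.2
      + (3 * (1 - v) + 4 * v * (1 - v) + v ^ 2 * (1 - v)) * h.fac.2 + 6 * (1 + v ^ 2) * v1

/-- `A` is met before it finds the marker, and `B`, `D`, `C` are met in this order, as in the
optimal profile. -/
theorem Config.bound_unfound_bdc (h : Config v f g z a b c d a q r s)
    (hpr : a ≤ r) (hps : a ≤ s) (hdc : d ≤ c) (hbd : b ≤ d) :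
    24 * v ^ 3 + 68 * v ^ 2 + 76 * v + 24 ≤ (v + 1) ^ 3 * (v + 3) * (a + b + c + d) := by
  have v0 := h.v0
  have v1 := h.v1
  have := sub_nonneg.2 v1
  have gac := h.lipg h.p0 hpr h.gA h.gC
  have gad := h.lipg h.p0 hps h.gA h.gD
  have fdc := h.lipf h.d0 hdc
  have fbd := h.lipf h.b0 hbd
  rcases le_total q s with hqs | hsq
  · have gbd := h.lipg h.q0 hqs h.gB h.gD
    rcases h.stB with hq | ⟨zq, eb⟩
    · subst hq
      linear_combination
        2 * (1 + v) * (3 + 10 * v + 3 * v ^ 2) * h.ga.1 + (1 + v) ^ 2 * (3 + v) * fdc.1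
        + 4 * v * (1 + v) * (3 + v) * h.fa.2 + 2 * (1 + v) ^ 2 * (3 + v) * h.gb.1
        + 3 * (1 + v) ^ 2 * (3 + v) * h.fab.1 + (1 + v) ^ 2 * (3 + v) * gac.2
        + (1 + v) * (3 + 10 * v + 3 * v ^ 2) * gbd.2 + 2 * v * (1 + v) * (3 + v) * fbd.2
        + 4 * v * (1 + 2 * v) * v1
    · rcases le_total z a with hza | haz
      · have fza := h.lipf h.z0 hza
        rcases le_total q r with hqr | hrq
        · have gbc := h.lipg h.q0 hqr h.gB h.gC
          -- the branch of the optimal profile: every inequality used here is an equality for it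
          linear_combination
            8 * (1 + 4 * v + 2 * v ^ 2 + v ^ 3) * eb
            + (5 + 13 * v + 7 * v ^ 2 + 7 * v ^ 3) * h.ga.1
            + (3 + v + 9 * v ^ 2 + 3 * v ^ 3) * h.fab.1
            + 4 * (1 + 4 * v + 2 * v ^ 2 + v ^ 3) * fza.2 + (1 + v) ^ 2 * (3 + v) * fdc.1
            + 4 * (1 + 4 * v + 2 * v ^ 2 + v ^ 3) * h.fz.1
            + (1 + 9 * v + 3 * v ^ 2 + 3 * v ^ 3) * gbd.2 + 2 * v * (1 + v) * (3 + v) * fbd.2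
            + 2 * (1 + 2 * v + 5 * v ^ 2) * gad.2 + (1 + v) ^ 2 * (3 + v) * gbc.2
            + (1 + v) ^ 2 * (7 + 9 * v) * h.gb.1
        · have gcb := h.lipg h.r0 hrq h.gC h.gB
          rcases h.stC with hr | ⟨zr, ec⟩
          · subst hr
            have : (1 : ℝ) ≤ 0 := by
              linear_combination
                1/2 * (2 + v) * hdc + 1/2 * hbd + 1/4 * (2 + v) * gcb.2 + 1/2 * gbd.2
                + 1/2 * v * h.qb + 1/4 * (2 + v) * gcb.1 + 1/2 * fbd.2
            norm_num at this
          · linear_combination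
              12 * (1 + v) ^ 3 * h.a0 + 4 * (1 + v) ^ 3 * fza.2 + 8 * (1 + v) ^ 3 * ec
              + 4 * (1 + v) ^ 3 * gcb.1 + 1/2 * (6 + 12 * v + 10 * v ^ 2 + 3 * v ^ 3) * fbd.2
              + 1/2 * (2 + 12 * v + 14 * v ^ 2 + 5 * v ^ 3) * h.fab.1 + 2 * (1 + v) ^ 3 * gad.2
              + 1/2 * (8 + 14 * v + 8 * v ^ 2 + v ^ 3) * h.fad.1 + (1 + v) ^ 2 * (3 + v) * fdc.1
              + (1 + v) ^ 2 * (7 + 5 * v) * gac.2 + hbd + 4 * (1 + v) ^ 3 * h.fz.1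
              + 2 * (1 + v ^ 2) * v1
      · have faz := h.lipf h.a0 haz
        linear_combination
          2 * (1 + v) * (3 + 10 * v + 3 * v ^ 2) * h.ga.1
          + (3 + v + 9 * v ^ 2 + 3 * v ^ 3) * h.fab.1 + 4 * v * (1 + v) * (3 + v) * h.fa.2
          + (1 + v) ^ 2 * (3 + v) * gac.2 + 2 * (3 + 10 * v + 3 * v ^ 2) * eb
          + (1 + v) ^ 2 * (3 + v) * fdc.1 + 2 * (1 + v) ^ 2 * (3 + v) * h.gb.1
          + (1 + v) * (3 + 10 * v + 3 * v ^ 2) * gbd.2 + 2 * v * (1 + v) * (3 + v) * fbd.2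
          + 2 * (3 + 10 * v + 3 * v ^ 2) * faz.1 + 2 * v * (3 + 10 * v + 3 * v ^ 2) * zq
          + 4 * v * (1 + 2 * v) * v1
  · have gdb := h.lipg h.s0 hsq h.gD h.gB
    rcases h.stD with hs | ⟨zs, ed⟩
    · subst hs
      have : (1 : ℝ) ≤ 0 := by
        linear_combination
          1/2 * fbd.2 + 1/2 * v * h.qb + 1/2 * hbd + 1/2 * gdb.1 + 1/2 * v * hsq
      norm_num at this
    · linear_combination
        -2 * (3 + 3 * v + 9 * v ^ 2 + v ^ 3) * ed
        + 2 * (9 + 16 * v + 5 * v ^ 2 + 2 * v ^ 3) * h.fa.2 + (1 + v) ^ 2 * (3 + v) * gac.2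
        + (3 + 7 * v + 17 * v ^ 2 + 5 * v ^ 3) * gdb.1 + (1 + v) ^ 2 * (3 + v) * fdc.1
        + (3 + v + 9 * v ^ 2 + 3 * v ^ 3) * h.fab.1 + 8 * v * (1 + v) ^ 2 * zs
        + 2 * (3 + 6 * v + 7 * v ^ 2) * gad.2 + (7 + 11 * v + 13 * v ^ 2 + v ^ 3) * h.fz.2
        + ((1 - v) + 6 * v * (1 - v) + v ^ 2 * (1 - v)) * h.fz.1
        + 2 * (6 + 7 * v + 3 * v ^ 3) * h.ga.1 + 2 * v * (1 + v) * (3 + v) * fbd.2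
        + 2 * (6 + v + 3 * v ^ 2) * v1

/-- `A` is met before it finds the marker, and `D` is met before `B` and `C`. -/
theorem Config.bound_unfound_db (h : Config v f g z a b c d a q r s)
    (hpr : a ≤ r) (hps : a ≤ s) (hdc : d ≤ c) (hdb : d ≤ b) :
    24 * v ^ 3 + 68 * v ^ 2 + 76 * v + 24 ≤ (v + 1) ^ 3 * (v + 3) * (a + b + c + d) := by
  have v0 := h.v0
  have v1 := h.v1
  have := sub_nonneg.2 v1
  have gac := h.lipg h.p0 hpr h.gA h.gC
  have gad := h.lipg h.p0 hps h.gA h.gD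
  have fdc := h.lipf h.d0 hdc
  have fdb := h.lipf h.d0 hdb
  rcases le_total q r with hqr | hrq
  · have gbc := h.lipg h.q0 hqr h.gB h.gC
    rcases h.stB with hq | ⟨zq, eb⟩
    · subst hq
      have gab := h.lipg h.a0 h.hab h.gA h.gB
      linear_combination
        ((1 - v) + 8 * v * (1 - v) + 2 * v ^ 2 * (1 - v)) * h.fa.1
        + (9/2 * (1 - v) + 9/4 * v * (1 - v)) * fdb.2
        + (19 + 41 * v + 17 * v ^ 2 + 3 * v ^ 3) * h.fa.2 + (1 + v) ^ 2 * (3 + v) * gbc.2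
        + (1 + v) ^ 2 * (3 + v) * fdc.1 + v ^ 2 * (13 + 3 * v) * h.fd.2
        + 1/2 * (15 + 44 * v + 59 * v ^ 2 + 10 * v ^ 3) * gad.2
        + 1/4 * (36 + 51 * v + 37 * v ^ 2 + 4 * v ^ 3) * fdb.1 + 1/2 * (3 + 16 * v) * h.gb.1
        + 13/2 * v ^ 2 * gab.1 + 3/2 * (7 + 8 * v) * h.ga.1 + 9/2 * (1 - v) * hdb
        + (9 + 11 * v + 12 * v ^ 2) * v1
    · rcases le_total z d with hzd | hdz
      · have fzd := h.lipf h.z0 hzd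
        rcases le_total z a with hza | haz
        · have fza := h.lipf h.z0 hza
          rcases le_total q s with hqs | hsq
          · have gbd := h.lipg h.q0 hqs h.gB h.gD
            linear_combination
              1/4 * v * (13 + 8 * v + 2 * v ^ 2) * h.fab.2 + 9/2 * (1 + v) * h.fa.2
              + 1/4 * (18 + 55 * v + 36 * v ^ 2 + 6 * v ^ 3) * fza.2
              + (9 + 39 * v + 40 * v ^ 2 + 8 * v ^ 3) * eb
              + (6 + 23 * v + 22 * v ^ 2 + 4 * v ^ 3) * h.gb.1 + (1 + v) ^ 2 * (3 + v) * fdc.1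
              + 1/2 * (9 + 39 * v + 40 * v ^ 2 + 8 * v ^ 3) * gbd.2
              + (1 + v) ^ 2 * (3 + v) * gac.2 + 1/4 * v * (23 + 44 * v + 10 * v ^ 2) * fzd.2
              + 1/2 * (3 + 10 * v) * hdb + 1/4 * (6 + 27 * v + 16 * v ^ 2 + 2 * v ^ 3) * fdb.1
              + 1/2 * (9 + 39 * v + 40 * v ^ 2 + 8 * v ^ 3) * h.fz.1
              + 2 * (1 + v) * (3 + v) * h.ga.1 + 4 * v0 + 2 * v * (2 + 5 * v) * v1
          · have gdb := h.lipg h.s0 hsq h.gD h.gB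
            rcases h.stD with hs | ⟨zs, ed⟩
            · subst hs
              linear_combination
                2 * (6 + 5 * v + 4 * v ^ 2 + v ^ 3) * h.ga.1 + (1 + v) ^ 2 * (3 + v) * gbc.2
                + 2 * (9 + 9 * v + 5 * v ^ 2 + v ^ 3) * h.fa.2 + (1 + v) ^ 2 * (3 + v) * fdc.1
                + (1 + v) ^ 2 * (3 + v) * fzd.2 + (1 + v) ^ 2 * (3 + v) * h.fab.1
                + (1 + v) ^ 2 * (3 + v) * h.fz.1 + 2 * (1 + v) ^ 2 * (3 + v) * gdb.1
                + (1 + v) * (9 + 6 * v + v ^ 2) * gad.2 + (1 + v) * (9 + 6 * v + v ^ 2) * h.fd.2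
                + 2 * (1 + v) ^ 2 * (3 + v) * eb + 2 * (12 + 15 * v + 7 * v ^ 2) * v1
            · linear_combination
                2 * (3 + 13 * v + 7 * v ^ 2 + v ^ 3) * h.fa.2 - 2 * (1 + v) ^ 2 * (3 + v) * ed
                + (1 + v) ^ 2 * (3 + v) * fdb.1 + (1 + v) ^ 2 * (3 + v) * h.fac.1
                + (1 + v) ^ 2 * (3 + v) * gbc.2 + 2 * v * (1 + v) * (3 + v) * h.fd.2
                + 2 * (1 + v) ^ 2 * (3 + v) * h.s0 + (1 + v) * (3 + 10 * v + 3 * v ^ 2) * gad.2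
                + 2 * (1 + v) ^ 2 * (3 + v) * gdb.1 + 2 * (1 + v) ^ 2 * (3 + v) * eb
                + 2 * (3 + 10 * v + 3 * v ^ 2) * h.ga.1 + 6 * (1 + v) * (1 + 2 * v) * v1
        · have faz := h.lipf h.a0 haz
          linear_combination
            2 * (1 + v) ^ 2 * (1 + 3 * v) * eb + (1 + v) ^ 2 * (5 + 7 * v) * gad.2
            + (1 + v) ^ 2 * (1 + 3 * v) * fzd.2
            + (2 * (1 - v) + 4 * v * (1 - v) + 2 * v ^ 2 * (1 - v)) * gac.2
            + 2 * (1 + v) ^ 2 * (1 + 3 * v) * h.gb.1 + (4 + 5 * v + 5 * v ^ 2 + 2 * v ^ 3) * fdb.1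
            + 4 * (1 + v) * (4 + 3 * v + v ^ 2) * h.fa.2 + (1 + v) ^ 2 * (3 + v) * fdc.1
            + (1 + v) ^ 2 * (1 + 3 * v) * faz.1 + (1 + v) ^ 2 * (1 + 3 * v) * gbc.2
            + (3 * (1 - v) + 3 * v * (1 - v) + v ^ 2 * (1 - v)) * fdb.2 + 2 * (1 - v) * hdb
            + 2 * (1 + v) * (5 + 2 * v + v ^ 2) * h.ga.1 + 4 * v1
      · have fdz := h.lipf h.d0 hdz
        linear_combination
          (21 + 35 * v + 23 * v ^ 2 + v ^ 3) * h.fa.2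
          + (12 + 4 * v + 8 * v * (1 - v) + 8 * v ^ 2 * (1 - v)) * h.ga.1
          + 4 * v * (1 + v) ^ 2 * h.gb.1
          + (3 * (1 - v) + 7 * v * (1 - v) + 2 * v ^ 2 * (1 - v)) * h.fb.2
          + v * (7 + 6 * v + 3 * v ^ 2) * fdb.1 + 2 * v * (1 + v) * (3 + v) * zq
          + (1 + v) ^ 2 * (3 + v) * fdc.1 + (1 + v) * (9 + 14 * v + 9 * v ^ 2) * gad.2
          + v * (1 + 10 * v + 5 * v ^ 2) * h.fd.2 + 2 * (1 + v) * (3 + v) * fdz.1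
          + (1 + v) ^ 2 * (3 + v) * gbc.2 + (6 * (1 - v) + 10 * v * (1 - v)) * hdb
          + 2 * (1 + v) * (3 + v) * eb + 4 * (3 + 3 * v + 2 * v ^ 2) * v1
  · have gcb := h.lipg h.r0 hrq h.gC h.gB
    rcases h.stC with hr | ⟨zr, ec⟩
    · subst hr
      linear_combination
        (12 + 20 * v + 8 * v * (1 - v) + 16 * v ^ 2 * (1 - v)) * h.ga.1
        + (1 + v) ^ 2 * (3 + v) * gcb.1
        + (12 + 38 * v + 30 * v ^ 2 + 2 * v ^ 2 * (1 - v)) * h.fa.2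
        + (9 + 7 * v + 4 * v * (1 - v) + 3 * v ^ 2 * (1 - v)) * h.fac.1
        + 4 * v * (1 + v) ^ 2 * fdc.1 + 2 * (1 + v) * (3 + v) * gac.2
        + (1 + v) ^ 2 * (3 + v) * fdb.1 + (1 + v) * (3 + 10 * v + 11 * v ^ 2) * gad.2
        + 2 * v * (1 + v) * (1 + 3 * v) * h.fd.2 + 4 * (3 + 5 * v + 4 * v ^ 2) * v1
    · have fzc := h.lipf h.z0 (zr.trans h.rc)
      rcases le_total z a with hza | haz
      · have fza := h.lipf h.z0 hza
        linear_combination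
          4 * (3 + 5 * v) * h.ga.1 + (1 + v) * (3 + 10 * v + 2 * v ^ 2) * gad.2
          + 2 * (1 + v) * (4 + 4 * v + v ^ 2) * ec
          + (16 + 40 * v + 19 * v ^ 2 + 3 * v ^ 3) * h.fa.2 + 1/2 * v * (1 + v) ^ 2 * h.fab.1
          + 2 * (1 + v) * h.rc + (1 + v) * (4 + 4 * v + v ^ 2) * h.fz.1
          + (1 + 7 * v + 5 * v ^ 2 + v ^ 3) * h.fac.1 + (1 + v) * (4 + 4 * v + v ^ 2) * fza.2
          + 2 * (3 + 8 * v + 5 * v ^ 2 + v ^ 3) * gac.2 + (1 + v) ^ 2 * (3 + v) * gcb.1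
          + 1/2 * (1 + v) ^ 2 * (6 + v) * fdb.1 + 1/2 * v * (1 + v) * (13 + 3 * v) * h.fad.2
          + 2 * (6 + 14 * v + 7 * v ^ 2) * v1
      · have faz := h.lipf h.a0 haz
        linear_combination
          2 * (10 + 21 * v + 8 * v ^ 2 + v ^ 3) * h.fa.2 + 2 * (1 + v) * (1 + 6 * v + v ^ 2) * ec
          + 4 * (1 + 3 * v) * fdc.1 + (2 * (1 - v) + 4 * v * (1 - v) + 2 * v ^ 2 * (1 - v)) * hdb
          + (1 + v) * (1 + 6 * v + v ^ 2) * gcb.1 + (1 + 3 * v + 11 * v ^ 2 + v ^ 3) * fdb.1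
          + 4 * (1 + 3 * v) * gac.2 + 4 * v * (1 - v) * h.fb.1
          + 2 * v * (1 + 6 * v + v ^ 2) * h.fd.2 + (1 + v) * (1 + 6 * v + v ^ 2) * fzc.2
          + (5 + 17 * v + 23 * v ^ 2 + 3 * v ^ 3) * gad.2 + 4 * (3 + 5 * v) * h.ga.1
          + (1 + v) * (1 + 6 * v + v ^ 2) * faz.1 + 8 * (1 + v) * (1 + 2 * v) * v1

/-- `A` finds the marker before it is met. -/
theorem Config.bound_found (h : Config v f g z a b c d p q r s)
    (hpr : p ≤ r) (hps : p ≤ s) (zp : z ≤ p) (ea : f a - (a - p) = f z) :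
    24 * v ^ 3 + 68 * v ^ 2 + 76 * v + 24 ≤ (v + 1) ^ 3 * (v + 3) * (a + b + c + d) := by
  have v0 := h.v0
  have v1 := h.v1
  have := sub_nonneg.2 v1
  have gac := h.lipg h.p0 hpr h.gA h.gC
  have gad := h.lipg h.p0 hps h.gA h.gD
  have fza := h.lipf h.z0 (zp.trans h.pa)
  rcases le_total z c with hzc | hcz
  · have fzc := h.lipf h.z0 hzc
    rcases le_total c d with hcd | hdc
    · have fcd := h.lipf h.c0 hcd
      rcases h.stC with hr | ⟨zr, ec⟩
      · subst hr
        rcases le_total q c with hqr | hrq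
        · have gbc := h.lipg h.q0 hqr h.gB h.gC
          rcases h.stB with hq | ⟨zq, eb⟩
          · subst hq
            linear_combination
              -2 * (4 + 6 * v + 5 * v ^ 2 + v ^ 3) * ea
              + (4 * (1 - v) + 4 * v * (1 - v) + v ^ 2 * (1 - v)) * fza.1
              + v ^ 2 * (13 + 3 * v) * h.fa.2 + (5 + 8 * v + 3 * v ^ 2 + v ^ 2 * (1 - v)) * h.gb.1
              + (1 + v) ^ 2 * (3 + v) * fcd.2
              + 1/2 * (23 + 43 * v + 27 * v ^ 2 + 3 * v ^ 3) * h.fab.1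
              + (2 + 14 * v + 13 * v ^ 2 + 3 * v ^ 3) * gbc.2 + (1 + v) ^ 2 * (3 + v) * gad.2
              + 2 * v * (1 + v) * (3 + v) * fzc.1 + (7 + 28 * v + 38 * v ^ 2 + 7 * v ^ 3) * h.ga.1
              + (1 - v) * gac.2 + (4 + 6 * v + 5 * v ^ 2 + v ^ 3) * h.fz.2
              + (9/2 * (1 - v) + 4 * v * (1 - v) + 1/2 * v ^ 2 * (1 - v)) * h.fab.2
              + 10 * v ^ 2 * v1
          · linear_combination
              (6 + 23 * v + 34 * v ^ 2 + 9 * v ^ 3) * h.ga.1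
              - 2 * (1 + v) * (3 + 7 * v + 2 * v ^ 2) * ea
              + 2 * (1 + v) * (3 + 7 * v + 2 * v ^ 2) * eb + (1 + v) ^ 2 * (3 + v) * h.fab.1
              + (1 + v) ^ 2 * (3 + v) * fcd.2 + (1 + v) ^ 2 * (3 + v) * gad.2
              + v * (1 + v) * (3 + v) * gac.2 + (1 + v) * (3 + 7 * v + 2 * v ^ 2) * gbc.2
              + 4 * v ^ 2 * (3 + v) * h.fa.2 + (1 + v) * (6 + 11 * v + 3 * v ^ 2) * h.gb.1
              + 2 * v * (1 + v) * (3 + v) * h.fac.1 + 4 * (1 + 3 * v) * v0 + 4 * v ^ 2 * v1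
        · have gcb := h.lipg h.r0 hrq h.gC h.gB
          linear_combination
            4 * (1 + v) ^ 2 * (3 + v) * h.ga.1 + 2 * v * (1 + v) * (3 + v) * h.fa.2
            + (1 + v) ^ 2 * (3 + v) * h.fab.1 + (1 + v) ^ 2 * (3 + v) * gad.2
            + 2 * (1 + v) ^ 2 * (3 + v) * fzc.1 - 2 * (1 + v) * (9 + 9 * v + 2 * v ^ 2) * ea
            + (1 + v) ^ 2 * (3 + v) * fcd.2 + 2 * (1 + v) ^ 2 * (3 + v) * gac.2
            + (1 + v) ^ 2 * (3 + v) * gcb.1 + 2 * v * (1 + v) * (3 + v) * zp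
            + 2 * (1 + v) * (6 + 5 * v + v ^ 2) * h.fz.2 + 4 * (3 + 5 * v + 3 * v ^ 2) * v1
      · have fzc := h.lipf h.z0 (zr.trans h.rc)
        rcases le_total r s with hrs | hsr
        · have gcd := h.lipg h.r0 hrs h.gC h.gD
          linear_combination
            (1 + v) ^ 2 * (3 + v) * h.fab.1 + 2 * v * (1 + v) * (3 + v) * h.fa.2
            + (1 + v) * (9 + 24 * v + 7 * v ^ 2) * h.ga.1 + (1 + v) ^ 2 * (3 + v) * h.gb.1
            - 4 * (1 + v) * (3 + 7 * v + 2 * v ^ 2) * ea + 2 * v * (1 + v) * (3 + v) * fzc.1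
            + 2 * (1 + v) ^ 2 * (3 + v) * h.rc + (1 + v) ^ 2 * (3 + v) * fcd.1
            + 2 * (1 + v) * (3 + 7 * v + 2 * v ^ 2) * gac.2 + (1 + v) ^ 2 * (3 + v) * gcd.1
            + 2 * (1 + v) ^ 2 * (3 + v) * h.sd + 4 * (1 + v) ^ 2 * (3 + v) * ec
            + 2 * v * (1 + v) * (3 + v) * h.fz.2 + 4 * v * (1 + 2 * v) * v1
        · have gdc := h.lipg h.s0 hsr h.gD h.gC
          linear_combination
            (1 + v) ^ 2 * (3 + v) * fcd.1 + 2 * (1 + v) ^ 2 * (3 + v) * hcd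
            + 2 * v * (1 + v) * (3 + v) * fzc.1 + 4 * (1 + v) ^ 2 * (3 + v) * ec
            + (1 + v) ^ 2 * (3 + v) * h.gb.1 + 2 * (1 + v) * (3 + 7 * v + 2 * v ^ 2) * gac.2
            + (1 + v) ^ 2 * (3 + v) * h.fab.1 + (1 + v) ^ 2 * (3 + v) * gdc.2
            + 2 * v * (1 + v) * (3 + v) * h.fa.2 - 4 * (1 + v) * (3 + 7 * v + 2 * v ^ 2) * ea
            + (1 + v) * (9 + 24 * v + 7 * v ^ 2) * h.ga.1 + 4 * (1 + v) ^ 2 * (3 + v) * h.rc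
            + 2 * v * (1 + v) * (3 + v) * h.fz.2 + 4 * v * (1 + 2 * v) * v1
    · have fdc := h.lipf h.d0 hdc
      rcases le_total z b with hzb | hbz
      · have fzb := h.lipf h.z0 hzb
        rcases h.stD with hs | ⟨zs, ed⟩
        · subst hs
          rcases h.stB with hq | ⟨zq, eb⟩
          · subst hq
            rcases le_total b d with hbd | hdb
            · have fbd := h.lipf h.b0 hbd
              have gbd := h.lipg h.b0 hbd h.gB h.gD
              linear_combination
                (1 + v) ^ 2 * (3 + v) * gac.2 + (1 + v) * (3 + 10 * v + 3 * v ^ 2) * h.fab.1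
                + ((1 - v) + 2 * v * (1 - v) + v ^ 2 * (1 - v)) * gad.2 + 4 * (1 + v) ^ 2 * h.fz.2
                + (1 + v) * (5 + 10 * v + v ^ 2) * h.gb.1 + 2 * v * (1 + v) * (3 + v) * fbd.2
                + 4 * (1 + v) ^ 2 * fzb.1 + (7 + 21 * v + 29 * v ^ 2 + 7 * v ^ 3) * h.ga.1
                + 4 * v ^ 2 * (3 + v) * h.fa.2 + 2 * (1 + v) * (1 + 5 * v + 2 * v ^ 2) * gbd.2
                + (1 + v) ^ 2 * (3 + v) * fdc.1 - 8 * (1 + v) ^ 2 * ea + 8 * v ^ 2 * v1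
            · have fdb := h.lipf h.d0 hdb
              rcases h.stC with hr | ⟨zr, ec⟩
              · subst hr
                rcases le_total b c with hbc | hcb
                · have gbc := h.lipg h.b0 hbc h.gB h.gC
                  have gdb := h.lipg h.d0 hdb h.gD h.gB
                  linear_combination
                    6 * v * (1 + v) * (3 + v) * zp + 3 * (1 + v) ^ 2 * (3 + v) * gad.2
                    + (1 + v) * (9 + 6 * v + v ^ 2) * fdb.1 + 2 * v * (1 + v) * (3 + v) * h.fa.2
                    + (1 + v) ^ 2 * (3 + v) * gbc.2 + (1 + v) ^ 2 * (3 + v) * h.fac.1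
                    - 6 * (1 + v) * (3 + v) * ea + 2 * (1 + v) ^ 2 * (3 + v) * h.fd.2
                    + 4 * (1 + v) * (3 + v) * h.ga.1 + 6 * (1 + v) * (3 + v) * h.fz.2
                    + 2 * (1 + v) * (3 + v) * gdb.1 + 4 * (6 + 9 * v + 4 * v ^ 2) * v1
                · have gcb := h.lipg h.c0 hcb h.gC h.gB
                  linear_combination
                    2 * v * (1 + v) * (1 + 3 * v) * h.fad.2
                    + (1 + v) * (3 + 6 * v + 7 * v ^ 2) * fza.2
                    + (9 + 7 * v + 4 * v * (1 - v) + 3 * v ^ 2 * (1 - v)) * fzc.1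
                    - (18 + 42 * v + 20 * v ^ 2 + 6 * v ^ 2 * (1 - v)) * ea
                    + (1 + v) ^ 2 * (3 + v) * fdb.1 + 4 * v * (1 + v) ^ 2 * fdc.1
                    + (12 + 20 * v + 8 * v * (1 - v) + 16 * v ^ 2 * (1 - v)) * h.ga.1
                    + 4 * v ^ 2 * (5 + 7 * v) * zp + (1 + v) * (3 + 10 * v + 11 * v ^ 2) * gad.2
                    + 2 * (1 + v) * (3 + v) * gac.2 + (1 + v) ^ 2 * (3 + v) * gcb.1
                    + 4 * (3 + 10 * v + 10 * v ^ 2 + v ^ 3) * h.fz.2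
                    + 4 * (3 + 5 * v + 4 * v ^ 2) * v1
              · have gdb := h.lipg h.d0 hdb h.gD h.gB
                linear_combination
                  (6 + 15 * v + 8 * v ^ 2 + 3 * v ^ 3) * h.fd.2 + (1 + v) ^ 2 * (3 + v) * h.fa.2
                  + (1 + v) ^ 2 * (3 + v) * fdb.1 + (15 + 22 * v + 11 * v ^ 2) * h.fz.2
                  + 4 * (1 + v) * (3 + v) * h.ga.1 + (3 + 11 * v + 9 * v ^ 2 + 9 * v ^ 3) * ec
                  + (3 + 11 * v + 9 * v ^ 2 + 9 * v ^ 3) * h.rc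
                  + 2 * (1 + v) ^ 2 * (3 + v) * gad.2 + v * (15 + 22 * v + 11 * v ^ 2) * zp
                  + (1 + v) ^ 2 * (3 + v) * gdb.1 - (18 + 33 * v + 20 * v ^ 2 + 9 * v ^ 3) * ea
                  + (3 + 10 * v + 11 * v ^ 2 + 8 * v ^ 3) * gac.2 + v * (1 - v) ^ 2 * fdc.2
                  + 2 * (1 + v) * (6 + v) * v1
          · rcases le_total q d with hqs | hsq
            · have gbd := h.lipg h.q0 hqs h.gB h.gD
              linear_combination
                -2 * (1 + v) * (3 + 7 * v + 2 * v ^ 2) * ea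
                + (1 + v) * (6 + 17 * v + 5 * v ^ 2) * h.ga.1 + (1 + v) ^ 2 * (3 + v) * h.fab.1
                + (1 + v) ^ 2 * (3 + v) * fdc.1 + (1 + v) * (6 + 11 * v + 3 * v ^ 2) * h.gb.1
                + (1 + v) ^ 2 * (3 + v) * gac.2 + v * (1 + v) * (3 + v) * gad.2
                + 2 * v * (1 + v) * (3 + v) * h.fd.2 + (1 + v) * (3 + 7 * v + 2 * v ^ 2) * gbd.2
                + 2 * (1 + v) * (3 + 7 * v + 2 * v ^ 2) * eb + 2 * v * (1 + v) * (3 + v) * h.fa.2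
                + 4 * v * (1 + 2 * v) * v1
            · have gdb := h.lipg h.s0 hsq h.gD h.gB
              linear_combination
                (1 + v) ^ 2 * (3 + v) * gac.2 + (19 + 27 * v + v ^ 2 + v ^ 3) * h.fz.2
                + 4 * v ^ 2 * (1 - v) * h.gd.2 + 2 * (1 + v) ^ 2 * (1 + 3 * v) * h.qb
                + ((1 - v) ^ 2 + v * (1 - v) ^ 2) * h.fb.1 + (1 + v) ^ 2 * (3 + v) * fdc.1
                + 2 * (3 + 9 * v + 11 * v ^ 2 + v ^ 3) * h.fd.2
                + (16 * v + 16 * v ^ 2 + 4 * v ^ 2 * (1 - v)) * zp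
                + (1 + v) * (3 + 6 * v + 7 * v ^ 2) * gdb.1 + 2 * (1 + v) ^ 2 * (1 + 3 * v) * eb
                - 2 * (9 + 15 * v + 5 * v ^ 2 + 3 * v ^ 3) * ea
                + 2 * (6 + 7 * v + 3 * v ^ 3) * h.ga.1 + (1 + v) ^ 2 * (3 + v) * fza.2
                + 2 * (1 + v) * (3 + 5 * v) * gad.2 + 2 * (6 + 7 * v + 3 * v ^ 2) * v1
        · have fzd := h.lipf h.z0 (zs.trans h.sd)
          rcases le_total q s with hqs | hsq
          · have gbd := h.lipg h.q0 hqs h.gB h.gD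
            rcases h.stB with hq | ⟨zq, eb⟩
            · subst hq
              linear_combination
                2 * v ^ 2 * (3 + v) * h.fd.2 + (3 * (1 - v) + 4 * v * (1 - v)) * h.fab.2
                + v ^ 2 * (15 + v) * h.fa.2 + (4 + 12 * v + 7 * v ^ 2 + v ^ 3) * h.fz.2
                - 4 * (1 + v) * (2 + v) * ea - 2 * v * (1 + v) * (3 + v) * ed
                + (1 + v) ^ 2 * (3 + v) * gac.2 + (1 - v) * gad.2 + (1 + v) ^ 2 * (3 + v) * fdc.1
                + 2 * v ^ 2 * (3 + v) * zp + (4 + 6 * v + 5 * v ^ 2 + v ^ 3) * fzb.1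
                + 2 * v * (1 + v) * (3 + v) * h.sd + (2 + 14 * v + 19 * v ^ 2 + 5 * v ^ 3) * gbd.2
                + 2 * (1 + v) * (3 + 7 * v) * h.fab.1
                + (5 + 11 * v + 4 * v ^ 2 * (1 - v)) * h.gb.1 + (7 + 25 * v + 32 * v ^ 2) * h.ga.1
                + 16 * v ^ 2 * v1
            · linear_combination
                2 * (1 + v) * (3 + 7 * v + 2 * v ^ 2) * eb + 2 * v * (1 + v) * (3 + v) * h.fa.2
                + (1 + v) * (6 + 11 * v + 3 * v ^ 2) * h.gb.1
                + (1 + v) * (6 + 17 * v + 5 * v ^ 2) * h.ga.1 + (1 + v) ^ 2 * (3 + v) * h.fab.1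
                + (1 + v) ^ 2 * (3 + v) * gac.2 + 2 * v * (1 + v) * (3 + v) * h.fd.2
                + (1 + v) ^ 2 * (3 + v) * fdc.1 + (1 + v) * (3 + 7 * v + 2 * v ^ 2) * gbd.2
                - 2 * (1 + v) * (3 + 7 * v + 2 * v ^ 2) * ea + v * (1 + v) * (3 + v) * gad.2
                + 4 * v * (1 + 2 * v) * v1
          · have gdb := h.lipg h.s0 hsq h.gD h.gB
            linear_combination
              2 * (1 + v) * (1 + 7 * v ^ 2) * h.sd + (1 + v) ^ 2 * (3 + v) * fdc.1
              + (1 + v) ^ 2 * (3 + v) * h.fab.1 + (2 * (1 - v) ^ 2 + 2 * v * (1 - v) ^ 2) * fzd.1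
              + (1 + v) ^ 2 * (3 + v) * gac.2 - 8 * (1 + v) * (1 + v + 2 * v ^ 2) * ed
              + (12 * (1 - v) + 28 * v * (1 - v) + 24 * v ^ 2 * (1 - v)) * h.ga.1
              + 2 * v * (11 + 24 * v + 21 * v ^ 2) * zp
              - (18 + 28 * v + 2 * v ^ 2 + 12 * v ^ 2 * (1 - v)) * ea
              + 2 * (1 + v) * (3 + 6 * v + 7 * v ^ 2) * gad.2
              + 2 * (12 + 23 * v + 20 * v ^ 2 + v ^ 3) * h.fz.2
              + 2 * v * (1 + v) * (3 + v) * h.fa.2 + (1 + v) ^ 2 * (3 + v) * gdb.1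
              + 4 * (3 + 4 * v + 4 * v ^ 2) * v1
      · have fbz := h.lipf h.b0 hbz
        linear_combination
          1/2 * v ^ 2 * (11 + 5 * v) * fza.2 + (1 + v) * (6 + 11 * v) * hbz
          + (1 + v) ^ 2 * (3 + v) * fdc.1 + 2 * v ^ 2 * (3 + v) * h.fa.2
          - (6 + 17 * v + 8 * v ^ 2) * ea + 1/2 * (1 + v) * (12 + 22 * v + 5 * v ^ 2) * fbz.2
          + (3 + 10 * v + 15 * v ^ 2 + 4 * v ^ 3) * h.ga.1
          + 1/2 * (1 + v) * (6 + 20 * v + 7 * v ^ 2) * h.fab.1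
          + 2 * v * (1 + v) * (3 + v) * h.fd.2 + (1 + v) ^ 2 * (3 + v) * gac.2
          + (6 + 23 * v + 28 * v ^ 2 + 8 * v ^ 3) * zp
          + 3 * (1 + v) * (3 + 7 * v + 2 * v ^ 2) * h.gb.1
          + (1 + v) * (3 + 10 * v + 3 * v ^ 2) * gad.2 + 4 * (1 + v) * v0 + 6 * v ^ 2 * v1
  · have fcz := h.lipf h.c0 hcz
    have : (1 : ℝ) ≤ 0 := by
      linear_combination
        1/4 * h.fac.1 + 1/4 * fcz.2 + 1/2 * hcz - 1/2 * ea + 1/2 * zp + 1/2 * gac.2 + 1/4 * fza.1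
    norm_num at this

/-- `D` stops following `g` before `A` does. -/
theorem Config.bound_D_first (h : Config v f g z a b c d p q r s)
    (hpr : p ≤ r) (hsp : s ≤ p) :
    24 * v ^ 3 + 68 * v ^ 2 + 76 * v + 24 ≤ (v + 1) ^ 3 * (v + 3) * (a + b + c + d) := by
  have v0 := h.v0
  have v1 := h.v1
  have := sub_nonneg.2 v1
  have gac := h.lipg h.p0 hpr h.gA h.gC
  have gda := h.lipg h.s0 hsp h.gD h.gA
  rcases h.stD with hs | ⟨zs, ed⟩
  · subst hs
    rcases le_total p q with hpq | hqp
    · have gab := h.lipg h.p0 hpq h.gA h.gB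
      linear_combination
        2 * (1 + v) * (13 + 8 * v + 3 * v ^ 2) * gda.1
        + (1 + v) * (17 + 4 * v + 3 * v ^ 2) * h.fa.2
        + (20 + 36 * v + 8 * v ^ 2 + 4 * v ^ 2 * (1 - v)) * h.had + (1 + v) ^ 2 * (3 + v) * gda.2
        + (1 + v) ^ 2 * (3 + v) * h.fac.1 + (12 * (1 - v) + 4 * v ^ 2 * (1 - v)) * h.gd.2
        + (1 + v) ^ 2 * (3 + v) * gab.1 + (1 + v) ^ 2 * (3 + v) * gac.2
        + (35 + 23 * v + 21 * v ^ 2 + v ^ 3) * h.fd.2 + (1 + v) ^ 2 * (3 + v) * h.fab.1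
        + 4 * (10 + 9 * v + 4 * v ^ 2) * v1
    · have gba := h.lipg h.q0 hqp h.gB h.gA
      rcases h.stB with hq | ⟨zq, eb⟩
      · subst hq
        have : (1 : ℝ) ≤ 0 := by
          linear_combination
            1/2 * h.hab + 1/2 * h.fab.1 + 1/4 * v * gba.1 + (1 + v) * h.pa + 1/4 * (2 + v) * gba.2
            + 1/2 * gda.1 + 1/2 * v * hsp + 1/2 * h.had + 1/2 * h.fad.2
        norm_num at this
      · rcases le_total z a with hza | haz
        · have fza := h.lipf h.z0 hza
          linear_combination
            (9 + 13 * v + 11 * v ^ 2 + 4 * v ^ 3) * fza.2 + (19 + 13 * v) * h.had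
            + 6 * (2 + 2 * v + 2 * v ^ 2 + v ^ 3) * h.pa + 7 * v ^ 2 * (2 + v) * h.ga.1
            + (1 + v) ^ 2 * (3 + v) * h.fab.1 + (5 + 14 * v + 6 * v ^ 2 + v ^ 3) * h.fad.2
            + (1 + v) ^ 2 * (3 + v) * h.fac.1 + (1 + v) ^ 2 * (3 + v) * gac.2
            + (9 + 13 * v + 11 * v ^ 2 + 4 * v ^ 3) * gba.2
            + (16 + 19 * v + 7 * v ^ 2 + v ^ 3) * gda.1
            + (12 + 20 * v + 16 * v ^ 2 + 5 * v ^ 3) * h.gb.1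
            + (9 + 13 * v + 11 * v ^ 2 + 4 * v ^ 3) * h.fz.1
            + 2 * (9 + 13 * v + 11 * v ^ 2 + 4 * v ^ 3) * eb + (11 + 5 * v + v ^ 2) * h.fd.2
            + 2 * (13 + 11 * v + 4 * v ^ 2) * v1
        · have faz := h.lipf h.a0 haz
          have : (1 : ℝ) ≤ 0 := by
            linear_combination
              1/2 * h.fad.2 + 1/4 * (2 + v) * gda.1 + 1/2 * eb + (1 + v) * h.pa + 1/2 * faz.1
              + 1/2 * (1 + v) * zq + 1/2 * v * hqp + 1/4 * v * gda.2 + 1/2 * haz + 1/2 * h.had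
              + 1/2 * gba.2
          norm_num at this
  · have fzd := h.lipf h.z0 (zs.trans h.sd)
    rcases h.stB with hq | ⟨zq, eb⟩
    · subst hq
      rcases le_total p b with hpq | hqp
      · have gab := h.lipg h.p0 hpq h.gA h.gB
        linear_combination
          16 * v * (3 + 2 * v + v ^ 2) * zs + 4 * v * (1 + v) * (3 + v) * h.fa.2
          + (1 + v) ^ 2 * (3 + v) * h.fab.1 + 16 * (3 + 2 * v + v ^ 2) * h.fz.2
          + (18 + 14 * v ^ 3 + 2 * v * (1 - v)) * h.had + (1 + v) ^ 2 * (3 + v) * gda.2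
          + (1 + v) ^ 2 * (3 + v) * h.fac.1 + (15 + v ^ 3 + 7 * v * (1 - v)) * h.fad.1
          + (1 + v) ^ 2 * (3 + v) * gab.1 - 16 * (3 + 2 * v + v ^ 2) * ed
          + (1 + v) ^ 2 * (3 + v) * gac.2 + 8 * (1 + v) * (3 + 2 * v + v ^ 2) * gda.1
          + (12 * (1 - v) + 4 * v * (1 - v) + 8 * v ^ 2 * (1 - v)) * h.gd.2
          + 4 * (9 + 8 * v + 4 * v ^ 2) * v1
      · have gba := h.lipg h.q0 hqp h.gB h.gA
        linear_combination
          (1 + v) ^ 2 * (3 + v) * h.fac.1 + (29 + 19 * v + 7 * v ^ 2 + v ^ 3) * gda.1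
          + 2 * (1 + v + 11 * v ^ 2 + 3 * v ^ 3) * gba.1
          + (7 + v + 13 * v ^ 2 + 3 * v ^ 3) * h.fa.2
          + (17 + 11 * v + 11 * v ^ 2 + v ^ 3) * h.fab.1
          + 4 * (3 + v + 7 * v ^ 2 + v ^ 3) * h.gb.1 - 2 * (29 + 19 * v + 7 * v ^ 2 + v ^ 3) * ed
          + 32 * h.had + 4 * (2 + v + v ^ 3) * h.pa + (1 + v) * (7 + 2 * v + 3 * v ^ 2) * gba.2
          + (1 + v) ^ 2 * (3 + v) * gac.2 + (29 + 19 * v + 7 * v ^ 2 + v ^ 3) * fzd.1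
          + (29 + 19 * v + 7 * v ^ 2 + v ^ 3) * h.fz.2 + 4 * (13 + 8 * v + 4 * v ^ 2) * v1
    · linear_combination
        (36 + 23 * v + 5 * v ^ 2) * h.fz.2 + (1 + v) * (3 + 10 * v + 3 * v ^ 2) * h.fa.2
        + (1 + v) ^ 2 * (3 + v) * gda.2 + (1 + v) * (1 + 10 * v + 5 * v ^ 2) * h.qb
        + (3 + 8 * v + 15 * v ^ 2 + 6 * v ^ 3) * h.gb.1 + (1 + v) * (9 + 18 * v + 5 * v ^ 2) * zs
        + (2 * (1 - v) ^ 2 + v * (1 - v) ^ 2) * h.fb.1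
        + 1/2 * (40 + 7 * v + 10 * v ^ 2 + 7 * v ^ 3) * h.had
        - (37 + 34 * v + 20 * v ^ 2 + 5 * v ^ 3) * ed
        + 1/2 * (46 + 61 * v + 43 * v ^ 2 + 10 * v ^ 3) * gda.1 + (1 + v) ^ 2 * (3 + v) * gac.2
        + 9 * (1 - v) * h.z0 + (1 + v) ^ 2 * (3 + v) * h.fac.1
        + (1 + v) * (1 + 10 * v + 5 * v ^ 2) * eb
        + 1/2 * (34 + 21 * v + 7 * v ^ 2 + 2 * v ^ 3) * h.fad.1 + (25 + 18 * v + 8 * v ^ 2) * v1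

/-- `C` stops following `g` before `A` does. -/
theorem Config.bound_C_first (h : Config v f g z a b c d p q r s)
    (hrp : r ≤ p) :
    24 * v ^ 3 + 68 * v ^ 2 + 76 * v + 24 ≤ (v + 1) ^ 3 * (v + 3) * (a + b + c + d) := by
  have v0 := h.v0
  have v1 := h.v1
  have gca := h.lipg h.r0 hrp h.gC h.gA
  rcases h.stC with hr | ⟨zr, ec⟩
  · subst hr
    have : (1 : ℝ) ≤ 0 := by
      linear_combination
        1/2 * h.hac + 1/2 * h.fac.1 + 1/2 * v * h.pa + 1/2 * gca.1 + 1/2 * v * hrp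
    norm_num at this
  · rcases le_total z a with hza | haz
    · have fza := h.lipf h.z0 hza
      linear_combination
        2 * (1 + v) * (3 + 10 * v + 3 * v ^ 2) * gca.1 + 4 * (1 + v) ^ 2 * (3 + v) * h.fz.1
        + 4 * v * (1 + v) * (3 + v) * zr + 3 * (1 + v) ^ 2 * (3 + v) * h.gc.2
        + (1 + v) ^ 2 * (3 + v) * h.gb.1 + 4 * v * (1 + v) * (3 + v) * fza.2
        + (3 + 10 * v + 12 * v ^ 2 + 6 * v ^ 3) * h.had + (1 + v) ^ 2 * (3 + v) * h.fab.1
        + 1/2 * v ^ 3 * h.fad.2 + (1 + v) ^ 2 * (3 + v) * h.fac.1 + 1/2 * v ^ 3 * h.fad.1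
        + 4 * (1 + v) * (3 + 7 * v + 2 * v ^ 2) * ec + 4 * v * (1 + 2 * v) * v1
    · have faz := h.lipf h.a0 haz
      have : (1 : ℝ) ≤ 0 := by
        linear_combination
          1/2 * ec + 1/2 * faz.1 + 1/4 * v * gca.2 + 1/2 * v * h.pa + 1/4 * (2 + v) * gca.1
          + 1/2 * (1 + v) * zr + 1/2 * haz
      norm_num at this

theorem Config.bound (h : Config v f g z a b c d p q r s) :
    24 * v ^ 3 + 68 * v ^ 2 + 76 * v + 24 ≤ (v + 1) ^ 3 * (v + 3) * (a + b + c + d) := by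
  rcases le_total r p with hrp | hpr
  · exact h.bound_C_first hrp
  rcases le_total s p with hsp | hps
  · exact h.bound_D_first hpr hsp
  rcases h.stA with rfl | ⟨zp, ea⟩
  · rcases le_total c d with hcd | hdc
    · exact h.bound_unfound_cd hpr hps hcd
    rcases le_total b d with hbd | hdb
    · exact h.bound_unfound_bdc hpr hps hdc hbd
    · exact h.bound_unfound_db hpr hps hdc hdb
  · exact h.bound_found hpr hps zp ea

end Config

/-! ### Symmetries -/

theorem Meet.neg_right {f g : ℝ → ℝ} {z o b T σ : ℝ} (h : Meet f g z o b T σ) :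
    Meet f (fun t => -g t) z o (-b) T σ :=
  ⟨h.nonneg, h.le, by linarith [h.eq],
    h.status.imp id fun ⟨h₁, h₂⟩ => ⟨h₁, by linarith⟩⟩

theorem Meet.neg_left {f g : ℝ → ℝ} {z o b T σ : ℝ} (h : Meet f g z o b T σ) :
    Meet (fun t => -f t) g z (-o) (-b) T σ :=
  ⟨h.nonneg, h.le, by linarith [h.eq],
    h.status.imp id fun ⟨h₁, h₂⟩ => ⟨h₁, by linarith⟩⟩

/-- The lower bound when the agent `(-1, 1)` is met first. -/
theorem bound_of_first {v z : ℝ} {f g : ℝ → ℝ} {a b c d p q r s : ℝ}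
    (v0 : 0 ≤ v) (v1 : v ≤ 1) (z0 : 0 ≤ z)
    (lf : LipFrom v f) (lg : LipFrom 1 g) (f0 : f 0 = 0) (g0 : g 0 = 0)
    (hA : Meet f g z (-1) 1 a p) (hB : Meet f g z 1 (-1) b q)
    (hC : Meet f g z 1 1 c r) (hD : Meet f g z (-1) (-1) d s)
    (hab : a ≤ b) (hac : a ≤ c) (had : a ≤ d) :
    24 * v ^ 3 + 68 * v ^ 2 + 76 * v + 24 ≤ (v + 1) ^ 3 * (v + 3) * (a + b + c + d) := by
  have eA := hA.eq
  have eB := hB.eq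
  have eC := hC.eq
  have eD := hD.eq
  have h : Config v f g z a b c d p q r s :=
    { v0, v1, z0, lf, lg, f0, g0, hab, hac, had
      p0 := hA.nonneg, q0 := hB.nonneg, r0 := hC.nonneg, s0 := hD.nonneg
      pa := hA.le, qb := hB.le, rc := hC.le, sd := hD.le
      gA := by linarith, gB := by linarith, gC := by linarith, gD := by linarith
      stA := hA.status.imp id fun ⟨h₁, h₂⟩ => ⟨h₁, by linarith⟩
      stB := hB.status.imp id fun ⟨h₁, h₂⟩ => ⟨h₁, by linarith⟩
      stC := hC.status.imp id fun ⟨h₁, h₂⟩ => ⟨h₁, by linarith⟩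
      stD := hD.status.imp id fun ⟨h₁, h₂⟩ => ⟨h₁, by linarith⟩ }
  exact h.bound

/-- The lower bound in general: reflecting the line or replacing `g` by `-g` permutes the four
agents transitively, so the first agent to be met may be assumed to be `(-1, 1)`. -/
theorem bound_of_meets {v z : ℝ} {f g : ℝ → ℝ} {a b c d p q r s : ℝ}
    (v0 : 0 ≤ v) (v1 : v ≤ 1) (z0 : 0 ≤ z)
    (lf : LipFrom v f) (lg : LipFrom 1 g) (f0 : f 0 = 0) (g0 : g 0 = 0)
    (hA : Meet f g z (-1) 1 a p) (hB : Meet f g z 1 (-1) b q)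
    (hC : Meet f g z 1 1 c r) (hD : Meet f g z (-1) (-1) d s) :
    24 * v ^ 3 + 68 * v ^ 2 + 76 * v + 24 ≤ (v + 1) ^ 3 * (v + 3) * (a + b + c + d) := by
  have nf0 : (fun t => -f t) 0 = 0 := by simp [f0]
  have ng0 : (fun t => -g t) 0 = 0 := by simp [g0]
  have hA₁ := hA.neg_right
  have hB₁ := hB.neg_right
  have hC₁ := hC.neg_right
  have hD₁ := hD.neg_right
  have hA₂ := hA.neg_left
  have hB₂ := hB.neg_left
  have hC₂ := hC.neg_left
  have hD₂ := hD.neg_left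
  have hA₃ := hA.neg_right.neg_left
  have hB₃ := hB.neg_right.neg_left
  have hC₃ := hC.neg_right.neg_left
  have hD₃ := hD.neg_right.neg_left
  simp only [neg_neg] at hA₁ hB₁ hC₁ hD₁ hA₂ hB₂ hC₂ hD₂ hA₃ hB₃ hC₃ hD₃
  have caseA (hab : a ≤ b) (hac : a ≤ c) (had : a ≤ d) :=
    bound_of_first v0 v1 z0 lf lg f0 g0 hA hB hC hD hab hac had
  have caseB (hba : b ≤ a) (hbd : b ≤ d) (hbc : b ≤ c) :=
    bound_of_first v0 v1 z0 lf.neg lg nf0 g0 hB₂ hA₂ hD₂ hC₂ hba hbd hbc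
  have caseC (hcd : c ≤ d) (hca : c ≤ a) (hcb : c ≤ b) :=
    bound_of_first v0 v1 z0 lf.neg lg.neg nf0 ng0 hC₃ hD₃ hA₃ hB₃ hcd hca hcb
  have caseD (hdc : d ≤ c) (hdb : d ≤ b) (hda : d ≤ a) :=
    bound_of_first v0 v1 z0 lf lg.neg f0 ng0 hD₁ hC₁ hB₁ hA₁ hdc hdb hda
  rw [show b + a + d + c = a + b + c + d by ring] at caseB
  rw [show c + d + a + b = a + b + c + d by ring] at caseC
  rw [show d + c + b + a = a + b + c + d by ring] at caseD
  grind

/-! ### Piecewise linear paths -/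

/-- A piecewise linear function with slopes in `[-K, K]` is `K`-Lipschitz. -/
theorem PiecewiseLin.lipFrom {S : Set ℝ} {K : ℝ} {f : ℝ → ℝ} (hS : S ⊆ Icc (-K) K)
    (hf : PiecewiseLin S f) : LipFrom K f := by
  obtain ⟨-, n, τ, c, τ0, τmono, hc, hpiece, hlast⟩ := hf
  have lin {x y e A α : ℝ} (he : e ∈ S) (hxy : x ≤ y) (hx : f x = A + e * (x - α))
      (hy : f y = A + e * (y - α)) : |f y - f x| ≤ K * (y - x) := by
    rw [hx, hy, show A + e * (y - α) - (A + e * (x - α)) = e * (y - x) by ring, abs_mul,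
      abs_of_nonneg (sub_nonneg.2 hxy)]
    exact mul_le_mul_of_nonneg_right (abs_le.2 (hS he)) (sub_nonneg.2 hxy)
  have chain {x y w : ℝ} (h₁ : |f y - f x| ≤ K * (y - x)) (h₂ : |f w - f y| ≤ K * (w - y)) :
      |f w - f x| ≤ K * (w - x) := by
    have := abs_sub_le (f w) (f y) (f x)
    linarith
  -- the Lipschitz bound on `[0, τ i]`, by induction on `i`
  have key : ∀ i, i ≤ n → ∀ x y, 0 ≤ x → x ≤ y → y ≤ τ i → |f y - f x| ≤ K * (y - x) := by
    intro i
    induction i with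
    | zero =>
      intro _ x y hx hxy hy
      obtain rfl : x = y := by linarith
      simp
    | succ i ih =>
      intro hi x y hx hxy hy
      have hp := hpiece i (by omega)
      have ih := ih (by omega)
      have hci := hc i (by omega)
      rcases le_total y (τ i) with hyi | hyi
      · exact ih x y hx hxy hyi
      rcases le_total x (τ i) with hxi | hxi
      · exact chain (ih x _ hx hxi le_rfl)
          (lin hci hyi (hp _ le_rfl (τmono i (by omega))) (hp y hyi hy))
      · exact lin hci hxy (hp x hxi (hxy.trans hy)) (hp y hyi hy)
  intro x y hx hxy
  rcases le_total y (τ n) with hyn | hyn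
  · exact key n le_rfl x y hx hxy hyn
  rcases le_total x (τ n) with hxn | hxn
  · exact chain (key n le_rfl x _ hx hxn le_rfl)
      (lin (hc n le_rfl) hyn (hlast _ le_rfl) (hlast y hyn))
  · exact lin (hc n le_rfl) hxy (hlast x hxn) (hlast y hyn)

theorem LipFrom.continuousOn {K : ℝ} {f : ℝ → ℝ} (hf : LipFrom K f) (hK : 0 ≤ K) :
    ContinuousOn f (Ici 0) := by
  apply LipschitzOnWith.continuousOn (K := K.toNNReal)
  rw [lipschitzOnWith_iff_dist_le_mul]
  intro x hx y hy
  rw [Real.dist_eq, Real.dist_eq, Real.coe_toNNReal K hK]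
  rcases le_total x y with h | h
  · rw [abs_sub_comm (f x), abs_sub_comm x, abs_of_nonneg (sub_nonneg.2 h)]
    exact hf x y hx h
  · rw [abs_of_nonneg (sub_nonneg.2 h)]
    exact hf y x hy h

/-! ### The lower bound -/

/-- The rendezvous set of two paths that are continuous on `[0, ∞)` contains its infimum. -/
theorem rdvTime_mem {f p : ℝ → ℝ} (hf : ContinuousOn f (Ici 0)) (hp : ContinuousOn p (Ici 0))
    (hne : {t | 0 ≤ t ∧ f t = p t}.Nonempty) :
    0 ≤ rdvTime f p ∧ f (rdvTime f p) = p (rdvTime f p) := by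
  have hcl : IsClosed {t | 0 ≤ t ∧ f t = p t} := by
    have := (hf.sub hp).preimage_isClosed_of_isClosed isClosed_Ici (isClosed_singleton (x := 0))
    convert this using 1
    ext t
    simp [sub_eq_zero]
  exact hcl.csInf_mem hne ⟨0, fun t ht => ht.1⟩

/-- A continuous function on `[0, τ]` that is `1` at `0` and does not vanish before `τ` is
nonnegative at all times up to `τ`. -/
theorem nonneg_of_ne_zero {h : ℝ → ℝ} {τ : ℝ} (hc : ContinuousOn h (Ici 0)) (h0 : 0 < h 0)
    (hne : ∀ t, 0 ≤ t → t < τ → h t ≠ 0) (hτ : 0 ≤ τ) : 0 ≤ h τ := by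
  by_contra! hneg
  obtain ⟨t, ht, ht0⟩ := intermediate_value_Icc' hτ (hc.mono Icc_subset_Ici_self) ⟨hneg.le, h0.le⟩
  rcases ht.2.lt_or_eq with hlt | rfl
  · exact hne t ht.1 hlt ht0
  · linarith

/-- An agent that has found the marker at time `τ` and is met later must have turned towards
player I: otherwise, being at least as fast as player I, it would never be caught. -/
theorem exists_meet {v z o b : ℝ} {f g p : ℝ → ℝ} (v1 : v ≤ 1) (v0 : 0 ≤ v) (z0 : 0 ≤ z)
    (lf : LipFrom v f) (lg : LipFrom 1 g) (f0 : f 0 = 0) (g0 : g 0 = 0) (ho : o = 1 ∨ o = -1)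
    (hp : AgentTraj f g z 1 o b p) (hne : {t | 0 ≤ t ∧ f t = p t}.Nonempty) :
    ∃ σ, Meet f g z o b (rdvTime f p) σ := by
  have cf := lf.continuousOn v0
  have cg := lg.continuousOn zero_le_one
  have cog : ContinuousOn (fun t => o + b * g t) (Ici 0) :=
    continuousOn_const.add (continuousOn_const.mul cg)
  rcases hp with ⟨hp, -⟩ | ⟨τ, -, d, hzτ, hmark, hbefore, -, -, hd, -, -, hp₁, hp₂⟩
  · obtain rfl : p = fun t => o + b * g t := funext hp
    obtain ⟨hT, hTeq⟩ := rdvTime_mem cf cog hne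
    exact ⟨_, hT, le_rfl, by rw [hTeq]; ring, Or.inl rfl⟩
  · have hτ : 0 ≤ τ := z0.trans hzτ
    have cp : ContinuousOn p (Ici 0) := by
      have h₁ : ContinuousOn p (Icc 0 τ) :=
        (cog.mono Icc_subset_Ici_self).congr fun t ht => hp₁ t ht.1 ht.2
      have h₂ : ContinuousOn p (Ici τ) :=
        (show Continuous fun t => o + b * g τ + d * (t - τ) by fun_prop).continuousOn.congr
          fun t ht => hp₂ t ht
      have := h₁.union_of_isClosed h₂ isClosed_Icc isClosed_Ici
      rwa [Icc_union_Ici_eq_Ici hτ] at this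
    obtain ⟨hT, hTeq⟩ := rdvTime_mem cf cp hne
    set T := rdvTime f p
    have hτT : τ ≤ T := by
      by_contra! hlt
      exact hbefore T hT hlt (by rw [hTeq, hp₁ T hT hlt.le])
    have hpT := hp₂ T hτT
    refine ⟨τ, hτ, hτT, ?_, Or.inr ⟨hzτ, hmark⟩⟩
    rcases hτT.eq_or_lt with heq | hlt
    · rw [hTeq, hpT, ← heq]; ring
    -- at time `τ` player I has not yet reached the agent
    have hside : 0 ≤ o * (o + b * g τ - f τ) := by
      refine nonneg_of_ne_zero (h := fun t => o * (o + b * g t - f t))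
        (continuousOn_const.mul (cog.sub cf)) ?_ (fun t h₁ h₂ => ?_) hτ
      · rcases ho with rfl | rfl <;> simp [f0, g0]
      · have : o ≠ 0 := by rcases ho with rfl | rfl <;> norm_num
        exact mul_ne_zero this (sub_ne_zero.2 (hbefore t h₁ h₂).symm)
    have hne : f τ ≠ o + b * g τ := by
      intro h
      have : T ≤ τ := csInf_le ⟨0, fun t ht => ht.1⟩ ⟨hτ, by rw [h, hp₁ τ hτ le_rfl]⟩
      linarith
    have hlip := abs_le.1 (lf τ T hτ hτT)
    have hvT : v * (T - τ) ≤ T - τ := mul_le_of_le_one_left (by linarith) v1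
    have hdo : d = -o := by
      by_contra hdo
      have hdo : d = o := by
        rcases hd with rfl | rfl <;> rcases ho with rfl | rfl <;> simp_all
      apply hne
      rw [hTeq, hpT, hdo] at hlip
      rcases ho with rfl | rfl <;> linarith [hlip.1, hlip.2]
    rw [hTeq, hpT, hdo]; ring

theorem rdvTime_nonneg (f p : ℝ → ℝ) : 0 ≤ rdvTime f p := Real.sInf_nonneg fun _ ht => ht.1

/-- Every strategy profile of the game has total rendezvous time at least the claimed value. -/
theorem MarkerProfile.le_markerSum {v z : ℝ} {f g : ℝ → ℝ} {p : ℝ → ℝ → ℝ → ℝ} (v0 : 0 ≤ v)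
    (v1 : v ≤ 1) (h : MarkerProfile (Icc (-v) v) {-1, 1} 1 f g z p) :
    (24 * v ^ 3 + 68 * v ^ 2 + 76 * v + 24) / ((v + 1) ^ 3 * (v + 3)) ≤ markerSum f p := by
  obtain ⟨hf, hg, z0, hp⟩ := h
  have lf : LipFrom v f := hf.lipFrom Subset.rfl
  have lg : LipFrom 1 g := hg.lipFrom (by rintro x (rfl | rfl) <;> norm_num)
  have meet {o b : ℝ} (ho : o = 1 ∨ o = -1) (hb : b = 1 ∨ b = -1) :
      ∃ σ, Meet f g z o b (rdvTime f (p o b)) σ :=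
    exists_meet v1 v0 z0 lf lg hf.1 hg.1 ho (hp o b ho hb).1 (hp o b ho hb).2
  obtain ⟨σA, hA⟩ := meet (.inr rfl) (.inl rfl)
  obtain ⟨σB, hB⟩ := meet (.inl rfl) (.inr rfl)
  obtain ⟨σC, hC⟩ := meet (.inl rfl) (.inl rfl)
  obtain ⟨σD, hD⟩ := meet (.inr rfl) (.inr rfl)
  have := bound_of_meets v0 v1 z0 lf lg hf.1 hg.1 hA hB hC hD
  rw [div_le_iff₀ (by positivity), markerSum]
  linarith

/-! ### The optimal profile -/

/-- Player I's path in the optimal profile: it moves at speed `v`, starting to the right and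
turning at the times `z, t₁, t₂, t₃`. -/
noncomputable def zigzag (v z t₁ t₂ t₃ t : ℝ) : ℝ :=
  v * if t ≤ z then t else if t ≤ t₁ then 2 * z - t else if t ≤ t₂ then 2 * z - 2 * t₁ + t
    else if t ≤ t₃ then 2 * z - 2 * t₁ + 2 * t₂ - t else 2 * z - 2 * t₁ + 2 * t₂ - 2 * t₃ + t

/-- Player II's strategy in the optimal profile: forward until time `t₁`, then backward. -/
noncomputable def turnBack (t₁ t : ℝ) : ℝ := if t ≤ t₁ then t else 2 * t₁ - t

section Zigzag

variable {v z t₁ t₂ t₃ t : ℝ}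

theorem zigzag_of_le (h : t ≤ z) : zigzag v z t₁ t₂ t₃ t = v * t := by
  rw [zigzag, if_pos h]

theorem zigzag_of_mem₁ (h : z ≤ t) (h' : t ≤ t₁) :
    zigzag v z t₁ t₂ t₃ t = v * (2 * z - t) := by
  unfold zigzag; split_ifs <;> grind

theorem zigzag_of_mem₂ (h₁ : z ≤ t₁) (h : t₁ ≤ t) (h' : t ≤ t₂) :
    zigzag v z t₁ t₂ t₃ t = v * (2 * z - 2 * t₁ + t) := by
  unfold zigzag; split_ifs <;> grind

theorem zigzag_of_mem₃ (h₁ : z ≤ t₁) (h₂ : t₁ ≤ t₂) (h : t₂ ≤ t) (h' : t ≤ t₃) :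
    zigzag v z t₁ t₂ t₃ t = v * (2 * z - 2 * t₁ + 2 * t₂ - t) := by
  unfold zigzag; split_ifs <;> grind

theorem zigzag_of_ge (h₁ : z ≤ t₁) (h₂ : t₁ ≤ t₂) (h₃ : t₂ ≤ t₃) (h : t₃ ≤ t) :
    zigzag v z t₁ t₂ t₃ t = v * (2 * z - 2 * t₁ + 2 * t₂ - 2 * t₃ + t) := by
  unfold zigzag; split_ifs <;> grind

theorem piecewiseLin_zigzag (v0 : 0 ≤ v) (h₀ : 0 ≤ z) (h₁ : z ≤ t₁) (h₂ : t₁ ≤ t₂)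
    (h₃ : t₂ ≤ t₃) : PiecewiseLin (Icc (-v) v) (zigzag v z t₁ t₂ t₃) := by
  have hv : v ∈ Icc (-v) v := ⟨by linarith, le_rfl⟩
  have hnv : -v ∈ Icc (-v) v := ⟨le_rfl, by linarith⟩
  refine ⟨by rw [zigzag_of_le h₀, mul_zero], 4,
    fun i => match i with | 0 => 0 | 1 => z | 2 => t₁ | 3 => t₂ | _ => t₃,
    fun i => match i with | 0 => v | 1 => -v | 2 => v | 3 => -v | _ => v,
    rfl, fun i hi => ?_, fun i hi => ?_, fun i hi t ht ht' => ?_, fun t ht => ?_⟩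
  · interval_cases i <;> assumption
  · interval_cases i <;> assumption
  · interval_cases i <;> simp only [Nat.reduceAdd] at ht ht' ⊢
    · rw [zigzag_of_le ht', zigzag_of_le h₀]; ring
    · rw [zigzag_of_mem₁ ht ht', zigzag_of_mem₁ le_rfl h₁]; ring
    · rw [zigzag_of_mem₂ h₁ ht ht', zigzag_of_mem₂ h₁ le_rfl h₂]; ring
    · rw [zigzag_of_mem₃ h₁ h₂ ht ht', zigzag_of_mem₃ h₁ h₂ le_rfl h₃]; ring
  · change t₃ ≤ t at ht
    change zigzag v z t₁ t₂ t₃ t = zigzag v z t₁ t₂ t₃ t₃ + v * (t - t₃)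
    rw [zigzag_of_ge h₁ h₂ h₃ ht, zigzag_of_ge h₁ h₂ h₃ le_rfl]; ring

theorem turnBack_of_le (h : t ≤ t₁) : turnBack t₁ t = t := if_pos h

theorem turnBack_of_ge (h : t₁ ≤ t) : turnBack t₁ t = 2 * t₁ - t := by
  unfold turnBack; split_ifs <;> grind

theorem piecewiseLin_turnBack (h : 0 ≤ t₁) : PiecewiseLin {-1, 1} (turnBack t₁) := by
  refine ⟨turnBack_of_le h, 1, fun i => match i with | 0 => 0 | _ => t₁,
    fun i => match i with | 0 => 1 | _ => -1, rfl, fun i hi => ?_, fun i hi => ?_,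
    fun i hi t ht ht' => ?_, fun t ht => ?_⟩
  · interval_cases i; exact h
  · interval_cases i <;> simp
  · interval_cases i
    simp only [Nat.reduceAdd] at ht ht' ⊢
    rw [turnBack_of_le ht', turnBack_of_le h]; ring
  · change t₁ ≤ t at ht
    change turnBack t₁ t = turnBack t₁ t₁ + -1 * (t - t₁)
    rw [turnBack_of_ge ht, turnBack_of_le le_rfl]; ring

end Zigzag

theorem rdvTime_le {f p : ℝ → ℝ} {t : ℝ} (ht : 0 ≤ t) (h : f t = p t) : rdvTime f p ≤ t :=
  csInf_le ⟨0, fun _ hs => hs.1⟩ ⟨ht, h⟩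

/-- The optimal profile. Player I drops the marker at time `z = 1 / (3 + v)` and meets the agents
`(-1, 1)`, `(1, -1)`, `(-1, -1)`, `(1, 1)` at the times `t₁ ≤ t₂ ≤ t₃ ≤ t₄` in this order. The
marker influences only the agent `(1, -1)`: it is found exactly at time `t₁`, when player II
turns, so this agent keeps going left and is met soon after. -/
theorem exists_profile {v : ℝ} (v0 : 0 < v) : ∃ f g z p,
    MarkerProfile (Icc (-v) v) {-1, 1} 1 f g z p ∧ markerSum f p ≤
      (24 * v ^ 3 + 68 * v ^ 2 + 76 * v + 24) / ((v + 1) ^ 3 * (v + 3)) := by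
  obtain ⟨z, hz⟩ : ∃ z, z = 1 / (3 + v) := ⟨_, rfl⟩
  obtain ⟨t₁, ht₁⟩ : ∃ t, t = 3 / (3 + v) := ⟨_, rfl⟩
  obtain ⟨t₂, ht₂⟩ : ∃ t, t = (3 + 5 * v) / ((3 + v) * (1 + v)) := ⟨_, rfl⟩
  obtain ⟨t₃, ht₃⟩ : ∃ t, t = (9 + 12 * v + 7 * v ^ 2) / ((3 + v) * (1 + v) ^ 2) := ⟨_, rfl⟩
  obtain ⟨t₄, ht₄⟩ : ∃ t, t = (2 + 4 * t₁ - (1 - v) * t₃) / (1 + v) := ⟨_, rfl⟩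
  have z0 : 0 < z := by rw [hz]; positivity
  have ez : v * z = 1 - t₁ := by rw [hz, ht₁]; field_simp; ring
  have ez' : t₁ = 3 * z := by rw [hz, ht₁]; field_simp
  have et₂ : t₂ - t₁ = 2 * v / ((3 + v) * (1 + v)) := by rw [ht₁, ht₂]; field_simp; ring
  have et₃ : t₃ - t₂ = (6 + 4 * v + 2 * v ^ 2) / ((3 + v) * (1 + v) ^ 2) := by
    rw [ht₃, ht₂]; field_simp; ring
  have et₄ : t₄ - t₃ = (14 * v + 8 * v ^ 2 + 2 * v ^ 3) / ((3 + v) * (1 + v) ^ 3) := by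
    rw [ht₄, ht₁, ht₃]; field_simp; ring
  have h₁ : z ≤ t₁ := by linarith
  have h₂ : t₁ ≤ t₂ := by rw [← sub_nonneg, et₂]; positivity
  have h₃ : t₂ ≤ t₃ := by rw [← sub_nonneg, et₃]; positivity
  have h₄ : t₃ ≤ t₄ := by rw [← sub_nonneg, et₄]; positivity
  have hvz : 0 < v * z := mul_pos v0 z0
  have t₁0 : 0 < t₁ := by linarith
  obtain ⟨f, hf⟩ : ∃ f, f = zigzag v z t₁ t₂ t₃ := ⟨_, rfl⟩
  obtain ⟨g, hg⟩ : ∃ g, g = turnBack t₁ := ⟨_, rfl⟩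
  have fz : f z = v * z := by rw [hf, zigzag_of_le le_rfl]
  have gle {t : ℝ} (ht : t ≤ t₁) : g t = t := by rw [hg, turnBack_of_le ht]
  have gge {t : ℝ} (ht : t₁ ≤ t) : g t = 2 * t₁ - t := by rw [hg, turnBack_of_ge ht]
  have meetA : f t₁ = -1 + 1 * g t₁ := by
    rw [hf, zigzag_of_mem₁ h₁ le_rfl, gle le_rfl, hz, ht₁]; field_simp; ring
  have meetB : f t₂ = 1 - t₂ := by
    rw [hf, zigzag_of_mem₂ h₁ h₂ le_rfl, hz, ht₁, ht₂]; field_simp; ring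
  have meetD : f t₃ = -1 + -1 * g t₃ := by
    rw [hf, zigzag_of_mem₃ h₁ h₂ h₃ le_rfl, gge (h₂.trans h₃), hz, ht₁, ht₂, ht₃]
    field_simp; ring
  have meetC : f t₄ = 1 + 1 * g t₄ := by
    rw [hf, zigzag_of_ge h₁ h₂ h₃ h₄, gge (h₂.trans (h₃.trans h₄)), hz, ht₄, ht₁, ht₂, ht₃]
    field_simp; ring
  -- player I never passes the marker before time `t₁`
  have fle {t : ℝ} (ht : t ≤ t₁) : f t ≤ v * z := by
    rcases le_total t z with h | h
    · rw [hf, zigzag_of_le h]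
      exact mul_le_mul_of_nonneg_left h v0.le
    · rw [hf, zigzag_of_mem₁ h ht]
      exact mul_le_mul_of_nonneg_left (by linarith) v0.le
  have trajA : AgentTraj f g z 1 (-1) 1 (fun t => -1 + 1 * g t) := by
    refine Or.inl ⟨fun _ => rfl, ?_⟩
    rintro ⟨τ, -, hτ, -⟩
    rw [fz] at hτ
    rcases le_total τ t₁ with h | h
    · rw [gle h] at hτ; linarith
    · rw [gge h] at hτ; linarith
  have trajB : AgentTraj f g z 1 1 (-1) (fun t => 1 - t) := by
    refine Or.inr ⟨t₁, -1, -1, h₁, by rw [gle le_rfl, fz, ez]; ring, fun t _ ht h => ?_,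
      fun t _ ht h => ?_, fun _ => ⟨1, one_pos, fun s _ hs => ?_⟩, .inr rfl, by norm_num,
      fun _ => rfl, fun t _ ht => ?_, fun t ht => ?_⟩
    · rw [gle ht.le] at h; linarith [fle ht.le]
    · rw [gle ht.le, fz] at h; linarith
    · rw [gle hs, gle le_rfl]; ring
    · dsimp only; rw [gle ht]; ring
    · dsimp only; rw [gle le_rfl]; ring
  have trajD : AgentTraj f g z 1 (-1) (-1) (fun t => -1 + -1 * g t) := by
    refine Or.inl ⟨fun _ => rfl, ?_⟩
    rintro ⟨τ, hzτ, hτ, hne⟩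
    rw [fz] at hτ
    rcases le_total τ t₁ with h | h
    · rw [gle h] at hτ; linarith
    · rw [gge h] at hτ
      -- the agent is met before it can return to the marker
      refine hne t₃ (by linarith) ?_ meetD
      have : 0 < τ - t₃ := by
        have : τ - t₃ = (8 * v + 6 * v ^ 2 + 2 * v ^ 3) / ((3 + v) * (1 + v) ^ 2) := by
          rw [show τ = 1 + v * z + 2 * t₁ by linarith, hz, ht₁, ht₃]
          field_simp; ring
        rw [this]; positivity
      linarith
  have trajC : AgentTraj f g z 1 1 1 (fun t => 1 + 1 * g t) := by
    -- reaching the marker, the agent is moving left and keeps doing so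
    by_cases h : ∃ τ, z ≤ τ ∧ 1 + 1 * g τ = f z ∧ ∀ t, 0 ≤ t → t < τ → f t ≠ 1 + 1 * g t
    · obtain ⟨τ, hzτ, hτ, hne⟩ := h
      have hτ' := hτ
      rw [fz] at hτ'
      rcases le_total τ t₁ with h | h
      · rw [gle h] at hτ'; linarith
      rw [gge h] at hτ'
      refine Or.inr ⟨τ, -1, -1, hzτ, hτ, hne, fun t hzt ht heq => ?_,
        fun _ => ⟨τ - t₁, by linarith, fun s hs hsτ => ?_⟩, .inr rfl, by norm_num,
        fun _ => rfl, fun t _ ht => rfl, fun t ht => ?_⟩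
      · rw [fz] at heq
        rcases le_total t t₁ with ht₁ | ht₁
        · rw [gle ht₁] at heq; linarith
        · rw [gge ht₁] at heq; linarith
      · rw [gge h, gge (by linarith)]; ring
      · dsimp only; rw [gge h, gge (h.trans ht)]; ring
    · exact Or.inl ⟨fun _ => rfl, h⟩
  refine ⟨f, g, z, fun o b t => if o = 1 ∧ b = -1 then 1 - t else o + b * g t,
    ⟨hf ▸ piecewiseLin_zigzag v0.le z0.le h₁ h₂ h₃, hg ▸ piecewiseLin_turnBack t₁0.le, z0.le, ?_⟩,
    ?_⟩
  · have e₁ : ¬(1 : ℝ) = -1 := by norm_num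
    have e₂ : ¬(-1 : ℝ) = 1 := by norm_num
    rintro o b (rfl | rfl) (rfl | rfl) <;> simp only [e₁, e₂, and_self, and_false, false_and,
      if_true, if_false]
    · exact ⟨trajC, t₄, by linarith, meetC⟩
    · exact ⟨trajB, t₂, by linarith, meetB⟩
    · exact ⟨trajA, t₁, by linarith, meetA⟩
    · exact ⟨trajD, t₃, by linarith, meetD⟩
  · have e₁ : ¬(1 : ℝ) = -1 := by norm_num
    have e₂ : ¬(-1 : ℝ) = 1 := by norm_num
    simp only [markerSum, e₁, e₂, and_self, and_false, false_and, if_true, if_false]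
    have hsum : t₄ + t₂ + t₁ + t₃ =
        (24 * v ^ 3 + 68 * v ^ 2 + 76 * v + 24) / ((v + 1) ^ 3 * (v + 3)) := by
      rw [ht₄, ht₁, ht₂, ht₃, add_comm v 1, add_comm v 3]; field_simp; ring
    rw [← hsum]
    gcongr
    · exact rdvTime_le (by linarith) meetC
    · exact rdvTime_le (by linarith) meetB
    · exact rdvTime_le (by linarith) meetA
    · exact rdvTime_le (by linarith) meetD

/-- For `v ∈ [17/1000, 1]`, the value of the marker game in which the slow player
(speed bound `v`) holds the marker equals `(24v³ + 68v² + 76v + 24)/((v+1)³(v+3))`. -/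
theorem slow_marker_game_value (v : ℝ) (hv : v ∈ Icc (17 / 1000 : ℝ) 1) :
    Vm v = (24 * v ^ 3 + 68 * v ^ 2 + 76 * v + 24) / ((v + 1) ^ 3 * (v + 3)) := by
  have v0 : 0 < v := lt_of_lt_of_le (by norm_num) hv.1
  have v1 : v ≤ 1 := hv.2
  obtain ⟨f, g, z, p, hp, hle⟩ := exists_profile v0
  rw [Vm, markerValue]
  apply le_antisymm
  · refine le_trans (csInf_le ⟨0, ?_⟩ ⟨f, g, z, p, hp, rfl⟩) hle
    rintro S ⟨f, g, z, p, -, rfl⟩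
    have := rdvTime_nonneg f
    simp only [markerSum]
    linarith [this (p 1 1), this (p 1 (-1)), this (p (-1) 1), this (p (-1) (-1))]
  · refine le_csInf ⟨_, f, g, z, p, hp, rfl⟩ ?_
    rintro S ⟨f, g, z, p, hp, rfl⟩
    exact hp.le_markerSum v0.le v1
end

section
/- The marker strictly helps the slow player: for every v ∈ (0,1], (24v³+68v²+76v+24)/((v+1)³(v+3)) < (4v²+16v+8)/(1+v)² and (24v³+68v²+76v+24)/((v+1)³(v+3)) < (16v²+28v+8)/(1+v)³; at v = 0 the first inequality becomes an equality (both sides equal 8). In particular, for v in any interval where the stated formulas give the respective game values, the value of the marker game held by the slow player is strictly smaller than the value of the game without marker. -/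
/-!
Both inequalities follow by factoring the difference of the two sides: it is
`4v(v³ + 2v² + 4v + 1) / ((v+1)³(v+3))` in the first case and
`8v(2 - v) / ((v+1)²(v+3))` in the second, and both are positive for `0 < v ≤ 1`.
-/

open Set

/-- The marker strictly helps the slow player: for every `v ∈ (0, 1]` the marker-game
value formula `(24v³ + 68v² + 76v + 24)/((v+1)³(v+3))` is strictly below both no-marker
value formulas `(4v² + 16v + 8)/(1+v)²` and `(16v² + 28v + 8)/(1+v)³`, while at `v = 0`
the first inequality becomes an equality, both sides being equal to `8`. -/
theorem marker_strictly_helps_slow_player :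
    (∀ v : ℝ, 0 < v → v ≤ 1 →
      (24 * v ^ 3 + 68 * v ^ 2 + 76 * v + 24) / ((v + 1) ^ 3 * (v + 3)) <
          (4 * v ^ 2 + 16 * v + 8) / (1 + v) ^ 2 ∧
        (24 * v ^ 3 + 68 * v ^ 2 + 76 * v + 24) / ((v + 1) ^ 3 * (v + 3)) <
          (16 * v ^ 2 + 28 * v + 8) / (1 + v) ^ 3) ∧
    (24 * (0 : ℝ) ^ 3 + 68 * 0 ^ 2 + 76 * 0 + 24) / ((0 + 1) ^ 3 * (0 + 3)) =
      (4 * (0 : ℝ) ^ 2 + 16 * 0 + 8) / (1 + 0) ^ 2 ∧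
    (4 * (0 : ℝ) ^ 2 + 16 * 0 + 8) / (1 + 0) ^ 2 = 8 := by
  refine ⟨fun v hv hv1 => ⟨?_, ?_⟩, by norm_num, by norm_num⟩
  · rw [← sub_pos]
    -- Over the common denominator the numerator has positive coefficients.
    have key : (4 * v ^ 2 + 16 * v + 8) / (1 + v) ^ 2 -
        (24 * v ^ 3 + 68 * v ^ 2 + 76 * v + 24) / ((v + 1) ^ 3 * (v + 3)) =
        4 * v * (v ^ 3 + 2 * v ^ 2 + 4 * v + 1) / ((v + 1) ^ 3 * (v + 3)) := by
      rw [add_comm 1 v]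
      field_simp
      ring
    rw [key]
    positivity
  · rw [← sub_pos]
    -- Here a factor `1 + v` cancels, and the sign is that of `2 - v`.
    have key : (16 * v ^ 2 + 28 * v + 8) / (1 + v) ^ 3 -
        (24 * v ^ 3 + 68 * v ^ 2 + 76 * v + 24) / ((v + 1) ^ 3 * (v + 3)) =
        8 * v * (2 - v) / ((v + 1) ^ 2 * (v + 3)) := by
      rw [add_comm 1 v]
      field_simp
      ring
    have h : 0 < 2 - v := by linarith
    rw [key]
    positivity
end
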